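/- arXiv:math/0304462 — 2 statements merged into one kernel-verified Lean document; each statement's English description precedes it below -/
import Mathlib

section
/- For every rational polytope K ⊂ R^d defined by m integral inequalities of total size φ, the number of vertices of the integer convex hull I(K) = conv(Z^d ∩ K) satisfies f_0(I(K)) ≤ 2 m^d (12 d^2 φ)^{d-1}. -/
open MeasureTheory Set Filter
noncomputable section

/-- Euclidean space `ℝ^d`. -/
abbrev E (d : ℕ) := EuclideanSpace ℝ (Fin d)

/-- The integer lattice `ℤ^d` viewed inside `ℝ^d`. -/
def intPoints (d : ℕ) : Set (E d) := {v | ∀ i, ∃ z : ℤ, v i = z}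

/-- The integer convex hull `I(K) = conv(ℤ^d ∩ K)`. -/
def integerHull (d : ℕ) (K : Set (E d)) : Set (E d) := convexHull ℝ (intPoints d ∩ K)

/-- `f₀(P)`: the number of vertices (extreme points) of `P`. -/
def numVertices (d : ℕ) (P : Set (E d)) : ℕ := (Set.extremePoints ℝ P).ncard

/-- The number of bits needed to encode an integer coefficient. -/
def bitSize (z : ℤ) : ℕ := Nat.size z.natAbs + 1

/-- The size of the system of `m` integral inequalities `⟨a j, x⟩ ≤ b j`. -/
def systemSize (d m : ℕ) (a : Fin m → Fin d → ℤ) (b : Fin m → ℤ) : ℕ :=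
  ∑ j, ((∑ i, bitSize (a j i)) + bitSize (b j))

/-- If only `0` is orthogonal to all the rows, some square subsystem is nonsingular. -/
lemma exists_det_ne {ι : Type} {d : ℕ} (A : ι → Fin d → ℝ)
    (h : ∀ v : Fin d → ℝ, (∀ j, ∑ i, A j i * v i = 0) → v = 0) :
    ∃ f : Fin d → ι, (Matrix.of fun k i => A (f k) i).det ≠ 0 := by
  have hspan : Submodule.span ℝ (Set.range A) = ⊤ := by
    by_contra hne
    obtain ⟨g, hg0, hg⟩ := Submodule.exists_le_ker_of_lt_top _ (lt_top_iff_ne_top.mpr hne)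
    apply hg0
    have hv := h (fun i => g fun j => if i = j then 1 else 0) (by
      intro j
      have h1 : A j ∈ LinearMap.ker g := hg (Submodule.subset_span ⟨j, rfl⟩)
      rw [LinearMap.mem_ker, LinearMap.pi_apply_eq_sum_univ] at h1
      simpa using h1)
    ext x
    have := congrFun hv x
    simp only [Pi.zero_apply] at this
    simp only [LinearMap.coe_comp, LinearMap.coe_single, Function.comp_apply, LinearMap.zero_apply]
    rw [← this]
    congr 1
    ext j
    simp [Pi.single_apply, eq_comm]
  obtain ⟨κ, g, -, hs, hli⟩ := exists_linearIndependent' ℝ A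
  rw [hspan] at hs
  let B := Module.Basis.mk hli hs.ge
  have : Finite κ := Module.Finite.finite_basis B
  have := Fintype.ofFinite κ
  have hc : Fintype.card κ = d := by
    have := Module.finrank_eq_card_basis B
    simpa using this.symm
  let e : Fin d ≃ κ := (Fintype.equivFinOfCardEq hc).symm
  refine ⟨g ∘ e, ?_⟩
  have hli2 : LinearIndependent ℝ ((A ∘ g) ∘ e) := hli.comp e e.injective
  have : IsUnit (Matrix.of fun k i => A ((g ∘ e) k) i) :=
    Matrix.linearIndependent_rows_iff_isUnit.mp hli2
  exact ((Matrix.isUnit_iff_isUnit_det _).mp this).ne_zero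

/-- A basis maximizing the weighted determinant represents every row with bounded coefficients. -/
lemma exists_max_basis {ι : Type} [Finite ι] {d : ℕ} (A : ι → Fin d → ℝ)
    (h : ∃ f : Fin d → ι, (Matrix.of fun k i => A (f k) i).det ≠ 0)
    (w : ι → ℝ) (hw : ∀ j, 0 < w j) :
    ∃ f : Fin d → ι, ∀ j, ∃ μ : Fin d → ℝ, (∀ i, A j i = ∑ k, μ k * A (f k) i) ∧
      ∀ k, |μ k| * w (f k) ≤ w j := by
  obtain ⟨f0, hf0⟩ := h
  have : Nonempty (Fin d → ι) := ⟨f0⟩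
  obtain ⟨f, hf⟩ := Finite.exists_max
    (fun f : Fin d → ι => |(Matrix.of fun k i => A (f k) i).det| / ∏ k, w (f k))
  have hP : ∀ f : Fin d → ι, 0 < ∏ k, w (f k) := fun f => Finset.prod_pos fun k _ => hw _
  have hdet : 0 < |(Matrix.of fun k i => A (f k) i).det| := by
    have h1 := hf f0
    have h2 : 0 < |(Matrix.of fun k i => A (f0 k) i).det| / ∏ k, w (f0 k) :=
      div_pos (abs_pos.mpr hf0) (hP f0)
    have h3 := lt_of_lt_of_le h2 h1
    exact (div_pos_iff_of_pos_right (hP f)).mp h3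
  refine ⟨f, fun j => ?_⟩
  set M : Matrix (Fin d) (Fin d) ℝ := Matrix.of fun k i => A (f k) i with hM
  refine ⟨fun k => (M.updateRow k (A j)).det / M.det, ?_, ?_⟩
  · intro i
    have h1 := congrFun (Matrix.mulVec_cramer M.transpose (A j)) i
    simp only [Matrix.mulVec, dotProduct, Matrix.cramer_transpose_apply, Matrix.det_transpose,
      Matrix.transpose_apply, Pi.smul_apply, smul_eq_mul] at h1
    have hne : M.det ≠ 0 := abs_pos.mp hdet
    have : A j i = (∑ x, M x i * (M.updateRow x (A j)).det) / M.det := by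
      rw [h1]; field_simp
    rw [this, Finset.sum_div]
    refine Finset.sum_congr rfl fun k _ => ?_
    simp only [hM, Matrix.of_apply]
    ring
  · intro k
    have h1 := hf (Function.update f k j)
    have h2 : (Matrix.of fun k' i => A (Function.update f k j k') i) = M.updateRow k (A j) := by
      ext k' i
      by_cases hk : k' = k
      · subst hk; simp
      · simp [hk, Matrix.updateRow_ne, hM]
    simp only [h2] at h1
    rw [div_le_div_iff₀ (hP _) (hP _)] at h1
    have h3 : ∏ x, w (f x) = w (f k) * ∏ x ∈ Finset.univ.erase k, w (f x) :=
      (Finset.mul_prod_erase _ _ (Finset.mem_univ k)).symm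
    have h4 : ∏ x, w (Function.update f k j x) = w j * ∏ x ∈ Finset.univ.erase k, w (f x) := by
      rw [← Finset.mul_prod_erase _ _ (Finset.mem_univ k)]
      congr 1
      · simp
      · refine Finset.prod_congr rfl fun x hx => ?_
        rw [Function.update_of_ne (Finset.ne_of_mem_erase hx)]
    have h5 : 0 < ∏ x ∈ Finset.univ.erase k, w (f x) := Finset.prod_pos fun _ _ => hw _
    rw [h3, h4, ← mul_assoc, ← mul_assoc] at h1
    have h6 := le_of_mul_le_mul_right h1 h5
    rw [abs_div, div_mul_eq_mul_div, div_le_iff₀ hdet, mul_comm (w j)]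
    exact h6

lemma abs_det_le_prod {d : ℕ} (M : Matrix (Fin d) (Fin d) ℝ) :
    |M.det| ≤ ∏ k, ∑ i, |M k i| := by
  rw [← Matrix.det_transpose, Matrix.det_apply]
  calc _ ≤ ∑ σ : Equiv.Perm (Fin d), |Equiv.Perm.sign σ • ∏ i, M.transpose (σ i) i| :=
        Finset.abs_sum_le_sum_abs _ _
    _ = ∑ σ : Equiv.Perm (Fin d), ∏ i, |M i (σ i)| := by
        refine Finset.sum_congr rfl fun σ _ => ?_
        rw [← Finset.abs_prod]
        rcases Int.units_eq_one_or (Equiv.Perm.sign σ) with h | h <;> simp [h]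
    _ ≤ ∏ k, ∑ i, |M k i| := by
        rw [Finset.prod_univ_sum]
        rw [← Finset.sum_image (s := Finset.univ) (g := fun σ : Equiv.Perm (Fin d) => (σ : Fin d → Fin d))
          (f := fun x => ∏ i, |M i (x i)|)]
        · apply Finset.sum_le_sum_of_subset_of_nonneg
          · intro x _; simp
          · intro x _ _
            exact Finset.prod_nonneg fun _ _ => abs_nonneg _
        · intro σ _ τ _ h
          exact Equiv.coe_fn_injective h

lemma sum_add_one_le_two_pow {ι : Type} (s : Finset ι) (x : ι → ℝ) (c : ι → ℕ)
    (hx : ∀ i, 0 ≤ x i) (h : ∀ i, x i + 1 ≤ 2 ^ c i) :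
    ∑ i ∈ s, x i + 1 ≤ 2 ^ ∑ i ∈ s, c i := by
  classical
  induction s using Finset.induction_on with
  | empty => simp
  | insert i s hi ih =>
    rw [Finset.sum_insert hi, Finset.sum_insert hi, pow_add]
    have h1 : 0 ≤ ∑ i ∈ s, x i := Finset.sum_nonneg fun i _ => hx i
    have := mul_le_mul (h i) ih (by positivity) (by positivity)
    nlinarith [mul_nonneg (hx i) h1]

lemma abs_add_one_le_bitSize (z : ℤ) : |(z : ℝ)| + 1 ≤ 2 ^ bitSize z := by
  have h1 := Nat.lt_size_self z.natAbs
  have h2 : z.natAbs + 1 ≤ 2 ^ bitSize z := by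
    unfold bitSize
    rw [pow_succ]; omega
  have h3 : ((z.natAbs : ℕ) : ℝ) = |(z : ℝ)| := by
    rw [Nat.cast_natAbs]; simp
  rw [← h3]
  exact_mod_cast h2

def rowSize {d m : ℕ} (a : Fin m → Fin d → ℤ) (b : Fin m → ℤ) (j : Fin m) : ℕ :=
  (∑ i, bitSize (a j i)) + bitSize (b j)

lemma row_le {d m : ℕ} (a : Fin m → Fin d → ℤ) (b : Fin m → ℤ) (j : Fin m) :
    ∑ i, |(a j i : ℝ)| + |(b j : ℝ)| ≤ 2 ^ rowSize a b j := by
  have h1 := sum_add_one_le_two_pow Finset.univ (fun i => |(a j i : ℝ)|) (fun i => bitSize (a j i))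
    (fun _ => abs_nonneg _) (fun i => abs_add_one_le_bitSize _)
  have h2 := abs_add_one_le_bitSize (b j)
  have h0 : 0 ≤ ∑ i, |(a j i : ℝ)| := Finset.sum_nonneg fun i _ => abs_nonneg _
  have h3 := mul_le_mul h1 h2 (by positivity) (by positivity)
  rw [rowSize, pow_add]
  nlinarith [mul_nonneg h0 (abs_nonneg (b j : ℝ))]

def poly {d m : ℕ} (a : Fin m → Fin d → ℤ) (b : Fin m → ℤ) : Set (E d) :=
  {x : E d | ∀ j, (∑ i, (a j i : ℝ) * x i) ≤ (b j : ℝ)}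

lemma lin_add {d m : ℕ} (a : Fin m → Fin d → ℤ) (j : Fin m) (x y : E d) (s t : ℝ) :
    ∑ i, (a j i : ℝ) * (s • x + t • y) i =
      s * ∑ i, (a j i : ℝ) * x i + t * ∑ i, (a j i : ℝ) * y i := by
  rw [Finset.mul_sum, Finset.mul_sum, ← Finset.sum_add_distrib]
  refine Finset.sum_congr rfl fun i _ => ?_
  simp only [PiLp.add_apply, PiLp.smul_apply, smul_eq_mul]
  ring

lemma no_kernel {d m : ℕ} (a : Fin m → Fin d → ℤ) (b : Fin m → ℤ)
    (hb : Bornology.IsBounded (poly a b)) (x : E d) (hx : x ∈ poly a b)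
    (v : E d) (hv : ∀ j, ∑ i, (a j i : ℝ) * v i = 0) : v = 0 := by
  by_contra hne
  obtain ⟨R, hR⟩ := hb.exists_norm_le
  have hvp : 0 < ‖v‖ := norm_pos_iff.mpr hne
  have hR0 : 0 ≤ R := (norm_nonneg x).trans (hR x hx)
  set t := (R + ‖x‖ + 1) / ‖v‖ with ht
  have ht0 : 0 ≤ t := by positivity
  have hmem : (1 : ℝ) • x + t • v ∈ poly a b := by
    intro j
    rw [lin_add, hv j]
    simpa using hx j
  have h1 := hR _ hmem
  have h2 : ‖t • v‖ = R + ‖x‖ + 1 := by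
    rw [norm_smul, Real.norm_of_nonneg ht0, ht]; field_simp
  have h3 : ‖t • v‖ ≤ ‖(1 : ℝ) • x + t • v‖ + ‖x‖ := by
    have : t • v = ((1 : ℝ) • x + t • v) - x := by simp
    rw [this]
    refine (norm_sub_le _ _).trans ?_
    simp
  linarith

lemma extreme_det {d m : ℕ} (a : Fin m → Fin d → ℤ) (b : Fin m → ℤ)
    (x : E d) (hx : x ∈ Set.extremePoints ℝ (poly a b)) :
    ∃ f : Fin d → Fin m, (∀ k, ∑ i, (a (f k) i : ℝ) * x i = b (f k)) ∧
      (Matrix.of fun k i => (a (f k) i : ℝ)).det ≠ 0 := by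
  obtain ⟨hxK, hext⟩ := mem_extremePoints.mp hx
  obtain ⟨g, hg⟩ := exists_det_ne
    (fun (j : {j : Fin m // ∑ i, (a j i : ℝ) * x i = b j}) i => (a j.1 i : ℝ)) (by
    intro v hv
    set V : E d := WithLp.toLp 2 v with hV
    have hVi : ∀ i, V i = v i := fun i => rfl
    have hev : ∀ j, ∀ᶠ ε in nhdsWithin (0 : ℝ) (Set.Ioi 0),
        ε * |∑ i, (a j i : ℝ) * V i| ≤ b j - ∑ i, (a j i : ℝ) * x i := by
      intro j
      rcases (hxK j).eq_or_lt with h | h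
      · have := hv ⟨j, h⟩
        simp only at this
        simp only [hVi, this, h]
        simp
      · have hc : Filter.Tendsto (fun ε : ℝ => ε * |∑ i, (a j i : ℝ) * V i|)
            (nhdsWithin (0 : ℝ) (Set.Ioi 0)) (nhds (0 * |∑ i, (a j i : ℝ) * V i|)) :=
          ((continuous_id.mul continuous_const).tendsto 0).mono_left nhdsWithin_le_nhds
        rw [zero_mul] at hc
        exact (hc.eventually (gt_mem_nhds (sub_pos.mpr h))).mono fun _ h => h.le
    have hall := (Filter.eventually_all.mpr hev).and
      (self_mem_nhdsWithin : ∀ᶠ ε in nhdsWithin (0 : ℝ) (Set.Ioi 0), ε ∈ Set.Ioi (0:ℝ))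
    obtain ⟨ε, hε, hε0⟩ := hall.exists
    have hε0 : 0 < ε := hε0
    have hp : (1 : ℝ) • x + ε • V ∈ poly a b := by
      intro j
      rw [lin_add]
      have := hε j
      nlinarith [le_abs_self (∑ i, (a j i : ℝ) * V i)]
    have hm : (1 : ℝ) • x + (-ε) • V ∈ poly a b := by
      intro j
      rw [lin_add]
      have := hε j
      nlinarith [neg_abs_le (∑ i, (a j i : ℝ) * V i)]
    have := (hext _ hp _ hm ⟨1/2, 1/2, by norm_num, by norm_num, by norm_num, by module⟩).1
    have h2 : ε • V = 0 := by simpa using this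
    have h3 : V = 0 := (smul_eq_zero.mp h2).resolve_left hε0.ne'
    ext i
    rw [← hVi, h3]; rfl)
  exact ⟨fun k => (g k).1, fun k => (g k).2, hg⟩

lemma extreme_slack_le {d m : ℕ} (a : Fin m → Fin d → ℤ) (b : Fin m → ℤ)
    (x : E d) (hx : x ∈ Set.extremePoints ℝ (poly a b)) (j : Fin m) :
    (b j : ℝ) - ∑ i, (a j i : ℝ) * x i ≤ 4 ^ systemSize d m a b := by
  obtain ⟨f, hact, hdet⟩ := extreme_det a b x hx
  have hsys : systemSize d m a b = ∑ j, rowSize a b j := rfl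
  set M : Matrix (Fin d) (Fin d) ℝ := Matrix.of fun k i => (a (f k) i : ℝ) with hM
  have hinj : Function.Injective f := by
    intro k l hkl
    by_contra hne
    apply hdet
    refine Matrix.det_zero_of_row_eq hne ?_
    ext i
    simp [hM, hkl]
  have hdet1 : 1 ≤ |M.det| := by
    have h1 : M = (Matrix.of fun k i => a (f k) i).map (fun z : ℤ => (z : ℝ)) := by
      ext k i; simp [hM]
    rw [h1, ← Int.cast_det] at hdet ⊢
    have h2 : (Matrix.of fun k i => a (f k) i).det ≠ 0 := by exact_mod_cast hdet
    exact_mod_cast Int.one_le_abs h2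
  have hφ : ∑ k, rowSize a b (f k) ≤ systemSize d m a b := by
    rw [hsys, ← Finset.sum_image (s := Finset.univ) (g := f) (f := rowSize a b)
      (fun x _ y _ h => hinj h)]
    exact Finset.sum_le_sum_of_subset (Finset.subset_univ _)
  have hxi : ∀ i, |x i| ≤ 2 ^ systemSize d m a b := by
    intro i
    have hmv : M.mulVec (fun i => x i) = fun k => (b (f k) : ℝ) := by
      ext k
      exact hact k
    have h1 : M.det * x i = (M.updateCol i (fun k => (b (f k) : ℝ))).det := by
      have h2 := Matrix.cramer_eq_adjugate_mulVec M (fun k => (b (f k) : ℝ))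
      rw [← hmv, Matrix.mulVec_mulVec, Matrix.adjugate_mul, Matrix.smul_mulVec,
        Matrix.one_mulVec] at h2
      have h3 := congrFun h2 i
      rw [Matrix.cramer_apply, hmv] at h3
      rw [h3]; rfl
    have h2 : |M.det| * |x i| ≤ 2 ^ systemSize d m a b := by
      rw [← abs_mul, h1]
      refine (abs_det_le_prod _).trans ?_
      calc _ ≤ ∏ k, (2 : ℝ) ^ rowSize a b (f k) := by
            refine Finset.prod_le_prod (fun k _ => Finset.sum_nonneg fun _ _ => abs_nonneg _) ?_
            intro k _
            refine le_trans ?_ (row_le a b (f k))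
            calc _ ≤ ∑ l, (|(a (f k) l : ℝ)| + if l = i then |(b (f k) : ℝ)| else 0) := by
                  refine Finset.sum_le_sum fun l _ => ?_
                  by_cases hl : l = i
                  · subst hl; simp
                  · simp [hl, Matrix.updateCol_ne, hM]
              _ = _ := by rw [Finset.sum_add_distrib]; simp
        _ = 2 ^ ∑ k, rowSize a b (f k) := by rw [Finset.prod_pow_eq_pow_sum]
        _ ≤ _ := pow_le_pow_right₀ (by norm_num) hφ
    refine le_trans ?_ h2
    exact le_mul_of_one_le_left (abs_nonneg _) hdet1
  have hj : rowSize a b j ≤ systemSize d m a b := by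
    rw [hsys]; exact Finset.single_le_sum (f := rowSize a b) (fun _ _ => Nat.zero_le _) (Finset.mem_univ j)
  set P : ℝ := 2 ^ systemSize d m a b with hP
  have hP1 : 1 ≤ P := one_le_pow₀ (by norm_num)
  have hrow : ∑ i, |(a j i : ℝ)| + |(b j : ℝ)| ≤ P :=
    (row_le a b j).trans (pow_le_pow_right₀ (by norm_num) hj)
  have h4 : (4 : ℝ) ^ systemSize d m a b = P * P := by
    rw [hP, ← mul_pow]; norm_num
  have h5 : -(∑ i, (a j i : ℝ) * x i) ≤ (∑ i, |(a j i : ℝ)|) * P := by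
    rw [← Finset.sum_neg_distrib, Finset.sum_mul]
    refine Finset.sum_le_sum fun i _ => ?_
    refine (neg_le_abs _).trans ?_
    rw [abs_mul]
    exact mul_le_mul_of_nonneg_left (hxi i) (abs_nonneg _)
  rw [h4]
  have h6 : (b j : ℝ) ≤ |(b j : ℝ)| * P :=
    (le_abs_self _).trans (le_mul_of_one_le_right (abs_nonneg _) hP1)
  nlinarith

lemma slack_le {d m : ℕ} (a : Fin m → Fin d → ℤ) (b : Fin m → ℤ)
    (hb : Bornology.IsBounded (poly a b)) (x : E d) (hx : x ∈ poly a b) (j : Fin m) :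
    (b j : ℝ) - ∑ i, (a j i : ℝ) * x i ≤ 4 ^ systemSize d m a b := by
  have hlin : ∀ j, Continuous fun x : E d => ∑ i, (a j i : ℝ) * x i := by
    intro j; fun_prop
  have hclosed : IsClosed (poly a b) := by
    have : poly a b = ⋂ j, {x : E d | (∑ i, (a j i : ℝ) * x i) ≤ (b j : ℝ)} := by
      ext x; simp [poly]
    rw [this]
    exact isClosed_iInter fun j => isClosed_le (hlin j) continuous_const
  have hconv : Convex ℝ (poly a b) := by
    intro x hx y hy s t hs ht hst j
    rw [lin_add]
    have h1 := mul_le_mul_of_nonneg_left (hx j) hs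
    have h2 := mul_le_mul_of_nonneg_left (hy j) ht
    have : (b j : ℝ) = s * b j + t * b j := by rw [← add_mul, hst, one_mul]
    linarith
  have hcomp : IsCompact (poly a b) := Metric.isCompact_of_isClosed_isBounded hclosed hb
  rw [← closure_convexHull_extremePoints hcomp hconv] at hx
  let H : Set (E d) := {x | (b j : ℝ) - ∑ i, (a j i : ℝ) * x i ≤ 4 ^ systemSize d m a b}
  have hH : closure (convexHull ℝ (Set.extremePoints ℝ (poly a b))) ⊆ H := by
    refine closure_minimal (convexHull_min ?_ ?_)
      (isClosed_le (continuous_const.sub (hlin j)) continuous_const)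
    · intro y hy; exact extreme_slack_le a b y hy j
    · intro x hx y hy s t hs ht hst
      change (b j : ℝ) - ∑ i, (a j i : ℝ) * (s • x + t • y) i ≤ _
      rw [lin_add]
      have h1 := mul_le_mul_of_nonneg_left hx hs
      have h2 := mul_le_mul_of_nonneg_left hy ht
      have h3 : (b j : ℝ) = s * b j + t * b j := by rw [← add_mul, hst, one_mul]
      have h4 : (4 : ℝ) ^ systemSize d m a b
        = s * 4 ^ systemSize d m a b + t * 4 ^ systemSize d m a b := by
        rw [← add_mul, hst, one_mul]
      linarith
  exact hH hx

def wt {d m : ℕ} (a : Fin m → Fin d → ℤ) (b : Fin m → ℤ) (j : Fin m) (x : E d) : ℝ :=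
  2 * ((b j : ℝ) - ∑ i, (a j i : ℝ) * x i) + 1

lemma wt_ge_one {d m : ℕ} (a : Fin m → Fin d → ℤ) (b : Fin m → ℤ) (j : Fin m) (x : E d)
    (hx : x ∈ poly a b) : 1 ≤ wt a b j x := by
  have := hx j
  unfold wt
  linarith

lemma mem_of_wt_nonneg {d m : ℕ} (a : Fin m → Fin d → ℤ) (b : Fin m → ℤ) (x : E d)
    (hx : x ∈ intPoints d) (h : ∀ j, 0 ≤ wt a b j x) : x ∈ poly a b := by
  choose z hz using hx
  intro j
  have h1 := h j
  unfold wt at h1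
  simp only [hz] at h1 ⊢
  have h2 : (0 : ℤ) ≤ 2 * (b j - ∑ i, a j i * z i) + 1 := by exact_mod_cast h1
  have h3 : ∑ i, a j i * z i ≤ b j := by omega
  exact_mod_cast h3

/-- A vertex cannot be the midpoint of two distinct integer points of the polytope. -/
lemma reflect_false {d m : ℕ} (a : Fin m → Fin d → ℤ) (b : Fin m → ℤ) (x y : E d)
    (hx : x ∈ Set.extremePoints ℝ (integerHull d (poly a b)))
    (hy : y ∈ intPoints d ∩ poly a b) (hne : y ≠ x)
    (h : ∀ j, 0 ≤ 2 * wt a b j x - wt a b j y) : False := by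
  have hxI : x ∈ intPoints d ∩ poly a b := extremePoints_convexHull_subset hx
  have hq : (2 : ℝ) • x + (-1 : ℝ) • y ∈ intPoints d ∩ poly a b := by
    have hq_int : (2 : ℝ) • x + (-1 : ℝ) • y ∈ intPoints d := by
      intro i
      obtain ⟨z, hz⟩ := hxI.1 i
      obtain ⟨u, hu⟩ := hy.1 i
      refine ⟨2 * z - u, ?_⟩
      simp [hz, hu]
      ring
    refine ⟨hq_int, mem_of_wt_nonneg a b _ hq_int fun j => ?_⟩
    have := h j
    unfold wt at this ⊢
    rw [lin_add]
    linarith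
  have := (mem_extremePoints.mp hx).2 y (subset_convexHull ℝ _ hy) _ (subset_convexHull ℝ _ hq)
    ⟨1/2, 1/2, by norm_num, by norm_num, by norm_num, by module⟩
  exact hne this.1

lemma alg_low {A C E W Λ η u v eA eE : ℝ} (hA : 0 < A) (hAC : A ≤ C) (hCE : C ≤ E)
    (hW : 0 < W) (hη0 : 0 ≤ η) (hη : η ≤ 1) (heA : |eA| ≤ η * W * A) (heE : |eE| ≤ η * W * E)
    (hu : C * u = C * W + (A - C) * Λ + eA) (hv : C * v = C * W + (E - C) * Λ + eE)
    (hv0 : 0 ≤ v) (h : 2 * C ≤ A + E - η * (E - A)) : 0 ≤ 2 * W - u := by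
  have hC : 0 < C := by linarith
  have heA' := (abs_le.mp heA).2
  have heE' := (abs_le.mp heE).2
  have hCv : 0 ≤ C * v := by positivity
  suffices hs : 0 ≤ C * (2 * W - u) from nonneg_of_mul_nonneg_right hs hC
  have hgoal : 0 ≤ C * W + (C - A) * Λ - η * W * A → 0 ≤ C * (2 * W - u) := by
    intro h1; nlinarith
  apply hgoal
  rcases hCE.eq_or_lt with hEq | hlt
  · subst hEq
    have h1 : A = C := by
      have : (C - A) * (1 + η) ≤ 0 := by linarith
      nlinarith
    subst h1
    have : η * W * A ≤ 1 * W * A := by gcongr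
    nlinarith
  · have hEC : 0 < E - C := by linarith
    suffices hs : 0 ≤ (E - C) * (C * W + (C - A) * Λ - η * W * A) from
      nonneg_of_mul_nonneg_right hs hEC
    have h1 : 0 ≤ (C - A) * (C * W + (E - C) * Λ + η * W * E) :=
      mul_nonneg (by linarith) (by linarith)
    have h2 : 0 ≤ (W * C) * (A + E - η * (E - A) - 2 * C) :=
      mul_nonneg (by positivity) (by linarith)
    nlinarith

lemma alg_high {A C E W Λ η u v eA eE : ℝ} (hA : 0 < A) (hAC : A ≤ C) (hCE : C ≤ E)
    (hW : 0 < W) (hη0 : 0 ≤ η) (hη : η ≤ 1) (heA : |eA| ≤ η * W * A) (heE : |eE| ≤ η * W * E)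
    (hu : C * u = C * W + (A - C) * Λ + eA) (hv : C * v = C * W + (E - C) * Λ + eE)
    (hu0 : 0 ≤ u) (h : A + E + η * (E - A) ≤ 2 * C) : 0 ≤ 2 * W - v := by
  have hC : 0 < C := by linarith
  have heA' := (abs_le.mp heA).2
  have heE' := (abs_le.mp heE).2
  have hCu : 0 ≤ C * u := by positivity
  suffices hs : 0 ≤ C * (2 * W - v) from nonneg_of_mul_nonneg_right hs hC
  have hgoal : 0 ≤ C * W - (E - C) * Λ - η * W * E → 0 ≤ C * (2 * W - v) := by
    intro h1; nlinarith
  apply hgoal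
  rcases hAC.eq_or_lt with hEq | hlt
  · subst hEq
    have h1 : A = E := by
      have : (E - A) * (1 + η) ≤ 0 := by linarith
      nlinarith
    subst h1
    have : η * W * A ≤ 1 * W * A := by gcongr
    nlinarith
  · have hEC : 0 < C - A := by linarith
    suffices hs : 0 ≤ (C - A) * (C * W - (E - C) * Λ - η * W * E) from
      nonneg_of_mul_nonneg_right hs hEC
    have h1 : 0 ≤ (E - C) * (C * W + (A - C) * Λ + η * W * A) :=
      mul_nonneg (by linarith) (by linarith)
    have h2 : 0 ≤ (W * C) * (2 * C - (A + E + η * (E - A))) :=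
      mul_nonneg (by positivity) (by linarith)
    nlinarith

/-- `f` represents every row with coefficients controlled by the weights at `x`. -/
def Good {n m : ℕ} (a : Fin m → Fin (n + 1) → ℤ) (b : Fin m → ℤ) (x : E (n + 1))
    (f : Fin (n + 1) → Fin m) : Prop :=
  ∀ j, ∃ μ : Fin (n + 1) → ℝ, (∀ i, (a j i : ℝ) = ∑ k, μ k * (a (f k) i : ℝ)) ∧
    ∀ k, |μ k| * wt a b (f k) x ≤ wt a b j x

def Close {n m : ℕ} (a : Fin m → Fin (n + 1) → ℤ) (b : Fin m → ℤ)
    (f : Fin (n + 1) → Fin m) (δ : ℝ) (x p : E (n + 1)) : Prop :=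
  ∀ i : Fin n, |wt a b (f 0) x * wt a b (f i.succ) p - wt a b (f 0) p * wt a b (f i.succ) x|
    ≤ δ * wt a b (f i.succ) x * wt a b (f 0) p

lemma expand {n m : ℕ} (a : Fin m → Fin (n + 1) → ℤ) (b : Fin m → ℤ)
    (f : Fin (n + 1) → Fin m) (δ : ℝ) (hδ : 0 ≤ δ) (x : E (n + 1))
    (j : Fin m) (μ : Fin (n + 1) → ℝ) (hμ : ∀ i, (a j i : ℝ) = ∑ k, μ k * (a (f k) i : ℝ))
    (hμw : ∀ k, |μ k| * wt a b (f k) x ≤ wt a b j x)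
    (p : E (n + 1)) (hp : 0 ≤ wt a b (f 0) p) (hc : Close a b f δ x p) :
    ∃ e, |e| ≤ n * δ * wt a b j x * wt a b (f 0) p ∧
      wt a b (f 0) x * wt a b j p = wt a b (f 0) x * wt a b j x
        + (wt a b (f 0) p - wt a b (f 0) x) * (∑ k, μ k * wt a b (f k) x) + e := by
  have hdiff : ∀ j, wt a b j p - wt a b j x = - 2 * ∑ i, (a j i : ℝ) * (p i - x i) := by
    intro j
    unfold wt
    simp only [mul_sub, Finset.sum_sub_distrib]
    ring
  have h1 : wt a b j p - wt a b j x = ∑ k, μ k * (wt a b (f k) p - wt a b (f k) x) := by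
    simp only [hdiff, hμ]
    simp only [Finset.sum_mul, Finset.mul_sum]
    rw [Finset.sum_comm]
    refine Finset.sum_congr rfl fun k _ => Finset.sum_congr rfl fun i _ => ?_
    ring
  refine ⟨∑ i : Fin n, μ i.succ * (wt a b (f 0) x * wt a b (f i.succ) p
    - wt a b (f 0) p * wt a b (f i.succ) x), ?_, ?_⟩
  · refine (Finset.abs_sum_le_sum_abs _ _).trans ?_
    calc _ ≤ ∑ i : Fin n, δ * wt a b j x * wt a b (f 0) p := by
          refine Finset.sum_le_sum fun i _ => ?_
          rw [abs_mul]
          calc _ ≤ |μ i.succ| * (δ * wt a b (f i.succ) x * wt a b (f 0) p) :=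
                mul_le_mul_of_nonneg_left (hc i) (abs_nonneg _)
            _ = (δ * wt a b (f 0) p) * (|μ i.succ| * wt a b (f i.succ) x) := by ring
            _ ≤ (δ * wt a b (f 0) p) * wt a b j x :=
                mul_le_mul_of_nonneg_left (hμw _) (by positivity)
            _ = _ := by ring
      _ = _ := by simp; ring
  · have h2 : wt a b j p = wt a b j x + ∑ k, μ k * (wt a b (f k) p - wt a b (f k) x) := by
      rw [← h1]; ring
    rw [h2, mul_add, add_assoc]
    congr 1
    rw [Fin.sum_univ_succ, Fin.sum_univ_succ, mul_add, mul_add, add_assoc, Finset.mul_sum,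
      Finset.mul_sum, ← Finset.sum_add_distrib]
    congr 1
    · ring
    · refine Finset.sum_congr rfl fun i _ => ?_
      ring

lemma middle {n m : ℕ} (a : Fin m → Fin (n + 1) → ℤ) (b : Fin m → ℤ)
    (f : Fin (n + 1) → Fin m) (δ : ℝ) (hδ : 0 ≤ δ) (hη : n * δ ≤ 1) (x p q : E (n + 1))
    (hx : x ∈ Set.extremePoints ℝ (integerHull (n + 1) (poly a b)))
    (hp : p ∈ intPoints (n + 1) ∩ poly a b) (hq : q ∈ intPoints (n + 1) ∩ poly a b)
    (hpx : p ≠ x) (hqx : q ≠ x) (hg : Good a b x f)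
    (hcp : Close a b f δ x p) (hcq : Close a b f δ x q)
    (h1 : wt a b (f 0) p ≤ wt a b (f 0) x) (h2 : wt a b (f 0) x ≤ wt a b (f 0) q) :
    |2 * wt a b (f 0) x - wt a b (f 0) p - wt a b (f 0) q| <
      n * δ * (wt a b (f 0) q - wt a b (f 0) p) := by
  have hxI : x ∈ intPoints (n + 1) ∩ poly a b := extremePoints_convexHull_subset hx
  have hη0 : 0 ≤ n * δ := by positivity
  have hpos : ∀ y, y ∈ intPoints (n + 1) ∩ poly a b → ∀ j, 0 < wt a b j y := fun y hy j =>
    lt_of_lt_of_le one_pos (wt_ge_one a b j y hy.2)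
  by_contra hcon
  rw [not_lt, le_abs] at hcon
  rcases hcon with hcon | hcon
  · refine reflect_false a b x q hx hq hqx fun j => ?_
    obtain ⟨μ, hμ, hμw⟩ := hg j
    obtain ⟨eA, heA, hA⟩ := expand a b f δ hδ x j μ hμ hμw p (hpos p hp _).le hcp
    obtain ⟨eE, heE, hE⟩ := expand a b f δ hδ x j μ hμ hμw q (hpos q hq _).le hcq
    exact alg_high (hpos p hp (f 0)) h1 h2 (hpos x hxI j) hη0 hη heA heE hA hE
      (hpos p hp j).le (by linarith)
  · refine reflect_false a b x p hx hp hpx fun j => ?_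
    obtain ⟨μ, hμ, hμw⟩ := hg j
    obtain ⟨eA, heA, hA⟩ := expand a b f δ hδ x j μ hμ hμw p (hpos p hp _).le hcp
    obtain ⟨eE, heE, hE⟩ := expand a b f δ hδ x j μ hμ hμw q (hpos q hq _).le hcq
    exact alg_low (hpos p hp (f 0)) h1 h2 (hpos x hxI j) hη0 hη heA heE hA hE
      (hpos q hq j).le (by linarith)

lemma exists_good {n m : ℕ} (a : Fin m → Fin (n + 1) → ℤ) (b : Fin m → ℤ)
    (hb : Bornology.IsBounded (poly a b)) (x : E (n + 1)) (hx : x ∈ poly a b) :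
    ∃ f, Good a b x f := by
  refine exists_max_basis (fun j i => (a j i : ℝ)) (exists_det_ne (fun j i => (a j i : ℝ)) ?_) (fun j => wt a b j x)
    (fun j => lt_of_lt_of_le one_pos (wt_ge_one a b j x hx))
  intro v hv
  have := no_kernel a b hb x hx (WithLp.toLp 2 v) hv
  simpa using this

lemma close_of_key {n m : ℕ} (a : Fin m → Fin (n + 1) → ℤ) (b : Fin m → ℤ)
    (f : Fin (n + 1) → Fin m) (x p : E (n + 1)) (hx : ∀ j, 0 < wt a b j x)
    (hp : ∀ j, 0 < wt a b j p)
    (h : ∀ i : Fin n, ⌊(Real.log (wt a b (f i.succ) x) - Real.log (wt a b (f 0) x)) * (6 * n)⌋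
      = ⌊(Real.log (wt a b (f i.succ) p) - Real.log (wt a b (f 0) p)) * (6 * n)⌋) :
    Close a b f (7 / (36 * n)) x p := by
  intro i
  have hn : (1 : ℝ) ≤ n := by
    have : 1 ≤ n := by have := i.2; omega
    exact_mod_cast this
  have h1 := Int.abs_sub_lt_one_of_floor_eq_floor (h i)
  set v : ℝ := (Real.log (wt a b (f i.succ) p) - Real.log (wt a b (f 0) p))
    - (Real.log (wt a b (f i.succ) x) - Real.log (wt a b (f 0) x)) with hv
  have h2 : |v| * (6 * n) < 1 := by
    have h6 : (0 : ℝ) ≤ 6 * n := by positivity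
    rw [← abs_of_nonneg h6, ← abs_mul, ← abs_neg]
    have e : -(v * (6 * n)) = (Real.log (wt a b (f i.succ) x) - Real.log (wt a b (f 0) x)) * (6 * n)
        - (Real.log (wt a b (f i.succ) p) - Real.log (wt a b (f 0) p)) * (6 * n) := by
      rw [hv]; ring
    rw [e]; exact h1
  have h3 : |v| ≤ 1 / (6 * n) := by
    rw [le_div_iff₀ (by positivity)]; exact h2.le
  have h4 : 1 / (6 * (n : ℝ)) ≤ 1 / 6 := by
    apply one_div_le_one_div_of_le <;> linarith
  have h5 := Real.abs_exp_sub_one_sub_id_le (x := v) (by linarith)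
  have h6 : |Real.exp v - 1| ≤ 7 / (36 * n) := by
    have e1 : |Real.exp v - 1| ≤ v ^ 2 + |v| := by
      have := abs_add_le (Real.exp v - 1 - v) v
      rw [sub_add_cancel] at this
      linarith
    have e2 : v ^ 2 ≤ (1 / 6) * |v| := by
      rw [← sq_abs]
      nlinarith [abs_nonneg v]
    have e3 : (7 : ℝ) / (36 * n) = 7 / 6 * (1 / (6 * n)) := by field_simp; norm_num
    rw [e3]
    linarith
  have h7 : wt a b (f 0) x * wt a b (f i.succ) p
      = wt a b (f 0) p * wt a b (f i.succ) x * Real.exp v := by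
    rw [hv, Real.exp_sub, Real.exp_sub, Real.exp_sub, Real.exp_log (hx _), Real.exp_log (hx _),
      Real.exp_log (hp _), Real.exp_log (hp _)]
    have := (hx (f 0)).ne'
    have := (hx (f i.succ)).ne'
    have := (hp (f 0)).ne'
    field_simp
  rw [h7]
  have h8 : wt a b (f 0) p * wt a b (f i.succ) x * Real.exp v
      - wt a b (f 0) p * wt a b (f i.succ) x
      = (wt a b (f i.succ) x * wt a b (f 0) p) * (Real.exp v - 1) := by ring
  have h9 : 0 < wt a b (f i.succ) x * wt a b (f 0) p := mul_pos (hx _) (hp _)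
  rw [h8, abs_mul, abs_of_pos h9, mul_assoc (7 / (36 * (n : ℝ))),
    mul_comm _ |Real.exp v - 1|]
  exact mul_le_mul_of_nonneg_right h6 h9.le

/-- Points sharing a key: at most three of them, and at most two in dimension one. -/
lemma fiber_card {n m : ℕ} (a : Fin m → Fin (n + 1) → ℤ) (b : Fin m → ℤ)
    (f : Fin (n + 1) → Fin m) (T : Finset (E (n + 1)))
    (hT : ∀ x ∈ T, x ∈ Set.extremePoints ℝ (integerHull (n + 1) (poly a b)))
    (hg : ∀ x ∈ T, Good a b x f)
    (hc : ∀ x ∈ T, ∀ p ∈ T, Close a b f (7 / (36 * n)) x p) :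
    T.card ≤ if n = 0 then 2 else 3 := by
  classical
  have hI : ∀ x ∈ T, x ∈ intPoints (n + 1) ∩ poly a b := fun x hx =>
    extremePoints_convexHull_subset (hT x hx)
  have hη : (n : ℝ) * (7 / (36 * n)) ≤ 1 / 5 := by
    rcases Nat.eq_zero_or_pos n with h | h
    · subst h; norm_num
    · have : (n : ℝ) ≠ 0 := by positivity
      field_simp
      norm_num
  have hδ : (0 : ℝ) ≤ 7 / (36 * n) := by positivity
  have mid : ∀ x ∈ T, ∀ p ∈ T, ∀ q ∈ T, p ≠ x → q ≠ x → wt a b (f 0) p ≤ wt a b (f 0) x →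
      wt a b (f 0) x ≤ wt a b (f 0) q →
      |2 * wt a b (f 0) x - wt a b (f 0) p - wt a b (f 0) q| <
      n * (7 / (36 * n)) * (wt a b (f 0) q - wt a b (f 0) p) := by
    intro x hx p hp q hq hpx hqx h1 h2
    exact middle a b f _ hδ (by linarith) x p q (hT x hx) (hI p hp) (hI q hq) hpx hqx
      (hg x hx) (hc x hx p hp) (hc x hx q hq) h1 h2
  have mid5 : ∀ x ∈ T, ∀ p ∈ T, ∀ q ∈ T, p ≠ x → q ≠ x → wt a b (f 0) p ≤ wt a b (f 0) x →
      wt a b (f 0) x ≤ wt a b (f 0) q →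
      |2 * wt a b (f 0) x - wt a b (f 0) p - wt a b (f 0) q| <
      1 / 5 * (wt a b (f 0) q - wt a b (f 0) p) := by
    intro x hx p hp q hq hpx hqx h1 h2
    refine (mid x hx p hp q hq hpx hqx h1 h2).trans_le ?_
    exact mul_le_mul_of_nonneg_right hη (by linarith)
  by_contra hcard
  rw [not_le] at hcard
  have h3 : 2 < T.card := by split_ifs at hcard <;> omega
  obtain ⟨p, hp, hpmin⟩ := Finset.exists_min_image T (wt a b (f 0)) (Finset.card_pos.mp (by omega))
  have hc1 := Finset.card_erase_of_mem hp
  obtain ⟨q, hq, hqmax⟩ := Finset.exists_max_image (T.erase p) (wt a b (f 0))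
    (Finset.card_pos.mp (by omega))
  have hc2 := Finset.card_erase_of_mem hq
  obtain ⟨hqp, hqT⟩ := Finset.mem_erase.mp hq
  obtain ⟨x, hx⟩ := Finset.card_pos.mp (show 0 < ((T.erase p).erase q).card by omega)
  obtain ⟨hxq, hx'⟩ := Finset.mem_erase.mp hx
  obtain ⟨hxp, hxT⟩ := Finset.mem_erase.mp hx'
  have mx := mid x hxT p hp q hqT hxp.symm hxq.symm (hpmin x hxT) (hqmax x hx')
  by_cases hn : n = 0
  · subst hn
    simp only [Nat.cast_zero, zero_mul] at mx
    exact absurd mx (not_lt.mpr (abs_nonneg _))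
  · rw [if_neg hn] at hcard
    obtain ⟨y, hy⟩ := Finset.card_pos.mp
      (show 0 < (((T.erase p).erase q).erase x).card by
        rw [Finset.card_erase_of_mem hx]; omega)
    obtain ⟨hyx, hy1⟩ := Finset.mem_erase.mp hy
    obtain ⟨hyq, hy2⟩ := Finset.mem_erase.mp hy1
    obtain ⟨hyp, hyT⟩ := Finset.mem_erase.mp hy2
    have h1 := abs_lt.mp (mid5 x hxT p hp q hqT hxp.symm hxq.symm (hpmin x hxT) (hqmax x hx'))
    have h2 := abs_lt.mp (mid5 y hyT p hp q hqT hyp.symm hyq.symm (hpmin y hyT) (hqmax y hy2))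
    rcases le_total (wt a b (f 0) x) (wt a b (f 0) y) with hxy | hxy
    · have h4 := abs_lt.mp (mid5 x hxT p hp y hyT hxp.symm hyx (hpmin x hxT) hxy)
      linarith [h1.1, h1.2, h2.1, h2.2, h4.1, h4.2]
    · have h4 := abs_lt.mp (mid5 y hyT p hp x hxT hyp.symm hyx.symm (hpmin y hyT) hxy)
      linarith [h1.1, h1.2, h2.1, h2.2, h4.1, h4.2]

lemma log_wt_bounds {n m : ℕ} (a : Fin m → Fin (n + 1) → ℤ) (b : Fin m → ℤ)
    (hb : Bornology.IsBounded (poly a b)) (x : E (n + 1)) (hx : x ∈ poly a b) (j : Fin m) :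
    0 ≤ Real.log (wt a b j x) ∧
      Real.log (wt a b j x) ≤ 13 / 6 * (systemSize (n + 1) m a b : ℝ) := by
  have h1 := wt_ge_one a b j x hx
  refine ⟨Real.log_nonneg h1, ?_⟩
  have h2 := slack_le a b hb x hx j
  have hφ : 2 ≤ systemSize (n + 1) m a b := by
    have e1 : rowSize a b j ≤ systemSize (n + 1) m a b :=
      Finset.single_le_sum (f := rowSize a b) (fun _ _ => Nat.zero_le _) (Finset.mem_univ j)
    have e2 : bitSize (a j 0) ≤ ∑ i, bitSize (a j i) :=
      Finset.single_le_sum (f := fun i => bitSize (a j i)) (fun _ _ => Nat.zero_le _)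
        (Finset.mem_univ 0)
    have e3 : 1 ≤ bitSize (a j 0) := Nat.le_add_left _ _
    have e4 : 1 ≤ bitSize (b j) := Nat.le_add_left _ _
    unfold rowSize at e1
    omega
  set φ := systemSize (n + 1) m a b
  have h3 : wt a b j x ≤ 8 ^ φ := by
    have e1 : (8 : ℝ) ^ φ = 2 ^ φ * 4 ^ φ := by rw [← mul_pow]; norm_num
    have e2 : (2 : ℝ) ^ 2 ≤ 2 ^ φ := pow_le_pow_right₀ (by norm_num) hφ
    have e3 : (1 : ℝ) ≤ 4 ^ φ := one_le_pow₀ (by norm_num)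
    unfold wt
    rw [e1]
    nlinarith
  have h4 : Real.log (wt a b j x) ≤ φ * Real.log 8 := by
    rw [← Real.log_pow]
    exact Real.log_le_log (by linarith) h3
  have h5 : Real.log 8 ≤ 13 / 6 := by
    have : (8 : ℝ) = 2 ^ 3 := by norm_num
    rw [this, Real.log_pow]
    have := Real.log_two_lt_d9
    push_cast
    linarith
  have h6 : (φ : ℝ) * Real.log 8 ≤ φ * (13 / 6) := by gcongr
  linarith

lemma numeric (n φ : ℕ) (hn : n ≠ 0) (hφ : 1 ≤ φ) :
    3 * (26 * n * φ + 1) ^ n ≤ 2 * (12 * (n + 1) ^ 2 * φ) ^ n := by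
  obtain ⟨k, rfl⟩ := Nat.exists_eq_succ_of_ne_zero hn
  have h1 : 26 * (k + 1) * φ + 1 ≤ 2 * (4 * (k + 1 + 1) ^ 2 * φ) := by
    have : 26 * (k + 1) + 1 ≤ 8 * (k + 1 + 1) ^ 2 := by
      zify
      nlinarith [sq_nonneg ((k : ℤ))]
    nlinarith
  have h2 : 12 * (k + 1 + 1) ^ 2 * φ = 3 * (4 * (k + 1 + 1) ^ 2 * φ) := by ring
  simp only [Nat.succ_eq_add_one]
  rw [h2]
  set X := 4 * (k + 1 + 1) ^ 2 * φ
  calc _ ≤ 3 * (2 * X) ^ (k + 1) := by gcongr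
    _ = 6 * X * (2 * X) ^ k := by ring
    _ ≤ 6 * X * (3 * X) ^ k := by gcongr; norm_num
    _ = _ := by ring

lemma finset_bound {n m : ℕ} (a : Fin m → Fin (n + 1) → ℤ) (b : Fin m → ℤ)
    (hb : Bornology.IsBounded (poly a b)) (V : Finset (E (n + 1)))
    (hV : ∀ x ∈ V, x ∈ Set.extremePoints ℝ (integerHull (n + 1) (poly a b))) :
    V.card ≤ 2 * m ^ (n + 1) * (12 * (n + 1) ^ 2 * systemSize (n + 1) m a b) ^ n := by
  classical
  rcases V.eq_empty_or_nonempty with h | ⟨x0, hx0⟩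
  · subst h; simp
  have hI : ∀ x ∈ V, x ∈ poly a b := fun x hx => (extremePoints_convexHull_subset (hV x hx)).2
  have hgood : ∀ x ∈ V, ∃ f, Good a b x f := fun x hx => exists_good a b hb x (hI x hx)
  obtain ⟨f0, -⟩ := hgood x0 hx0
  have : Nonempty (Fin (n + 1) → Fin m) := ⟨f0⟩
  choose! F hF using hgood
  set φ := systemSize (n + 1) m a b with hφdef
  let key : E (n + 1) → (Fin (n + 1) → Fin m) × (Fin n → ℤ) := fun x =>
    (F x, fun i => ⌊(Real.log (wt a b (F x i.succ) x) - Real.log (wt a b (F x 0) x)) * (6 * n)⌋)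
  let N : ℕ := 13 * n * φ
  let S : Finset ((Fin (n + 1) → Fin m) × (Fin n → ℤ)) :=
    Finset.univ ×ˢ Fintype.piFinset fun _ => Finset.Icc (-(N : ℤ)) N
  have hkey : ∀ x ∈ V, key x ∈ S := by
    intro x hx
    simp only [S, key, Finset.mem_product, Finset.mem_univ, true_and, Fintype.mem_piFinset,
      Finset.mem_Icc]
    intro i
    have h1 := log_wt_bounds a b hb x (hI x hx) (F x i.succ)
    have h2 := log_wt_bounds a b hb x (hI x hx) (F x 0)
    have hn : (0 : ℝ) ≤ 6 * n := by positivity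
    have hNe : (N : ℝ) = 13 / 6 * φ * (6 * n) := by simp only [N]; push_cast; ring
    constructor
    · rw [Int.le_floor]
      push_cast
      rw [hNe, ← neg_mul]
      exact mul_le_mul_of_nonneg_right (by linarith) hn
    · have : (⌊(Real.log (wt a b (F x i.succ) x) - Real.log (wt a b (F x 0) x)) * (6 * n)⌋ : ℝ)
          ≤ N := by
        refine (Int.floor_le _).trans ?_
        rw [hNe]
        exact mul_le_mul_of_nonneg_right (by linarith) hn
      exact_mod_cast this
  have hcard := Finset.card_le_mul_card_image_of_maps_to hkey (if n = 0 then 2 else 3) (by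
    intro k _
    refine fiber_card a b k.1 _ ?_ ?_ ?_
    · intro x hx
      exact hV x (Finset.mem_filter.mp hx).1
    · intro x hx
      obtain ⟨hxV, hxk⟩ := Finset.mem_filter.mp hx
      rw [← hxk]
      exact hF x hxV
    · intro x hx p hp
      obtain ⟨hx, hxk⟩ := Finset.mem_filter.mp hx
      obtain ⟨hp, hpk⟩ := Finset.mem_filter.mp hp
      have hpos : ∀ y ∈ V, ∀ j, 0 < wt a b j y := fun y hy j =>
        lt_of_lt_of_le one_pos (wt_ge_one a b j y (hI y hy))
      refine close_of_key a b k.1 x p (hpos x hx) (hpos p hp) fun i => ?_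
      have e1 : F x = k.1 := congrArg Prod.fst hxk
      have e2 : F p = k.1 := congrArg Prod.fst hpk
      have e3 := congrFun (congrArg Prod.snd hxk) i
      have e4 := congrFun (congrArg Prod.snd hpk) i
      simp only [key, e1] at e3
      simp only [key, e2] at e4
      rw [e3, e4])
  have hS : S.card = m ^ (n + 1) * (26 * n * φ + 1) ^ n := by
    have e : ((N : ℤ) + 1 + (N : ℤ)).toNat = 26 * n * φ + 1 := by
      have : ((N : ℤ) + 1 + (N : ℤ)) = ((2 * N + 1 : ℕ) : ℤ) := by push_cast; ring
      rw [this, Int.toNat_natCast]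
      simp only [N]
      ring
    simp [S, Finset.card_product, Fintype.card_piFinset, e]
  rw [hS] at hcard
  refine hcard.trans ?_
  by_cases hn : n = 0
  · subst hn; simp
  · rw [if_neg hn]
    have hφ : 1 ≤ φ := by
      by_contra h
      have h0 : φ = 0 := by omega
      have e1 : rowSize a b (f0 0) ≤ φ :=
        Finset.single_le_sum (f := rowSize a b) (fun _ _ => Nat.zero_le _) (Finset.mem_univ _)
      have e4 : 1 ≤ bitSize (b (f0 0)) := Nat.le_add_left _ _
      unfold rowSize at e1
      omega
    calc _ = m ^ (n + 1) * (3 * (26 * n * φ + 1) ^ n) := by ring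
      _ ≤ m ^ (n + 1) * (2 * (12 * (n + 1) ^ 2 * φ) ^ n) :=
          Nat.mul_le_mul_left _ (numeric n φ hn hφ)
      _ = _ := by ring

/-- Cook–Hartman–Kannan–McDiarmid: for a rational polytope `K ⊆ ℝ^d` given by `m` integral
inequalities of total size `φ`, the integer hull has at most `2 m^d (12 d² φ)^{d-1}`
vertices. -/
theorem vertices_of_integer_hull_of_rational_polytope (d m : ℕ) (hd : 1 ≤ d)
    (a : Fin m → Fin d → ℤ) (b : Fin m → ℤ)
    (K : Set (E d)) (hK : K = {x : E d | ∀ j, (∑ i, (a j i : ℝ) * x i) ≤ (b j : ℝ)})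
    (hKb : Bornology.IsBounded K) :
    numVertices d (integerHull d K) ≤
      2 * m ^ d * (12 * d ^ 2 * systemSize d m a b) ^ (d - 1) := by
  obtain ⟨n, rfl⟩ := Nat.exists_eq_add_of_le' hd
  have hK' : K = poly a b := hK
  subst hK'
  unfold numVertices
  by_cases hfin : (Set.extremePoints ℝ (integerHull (n + 1) (poly a b))).Finite
  · rw [Set.ncard_eq_toFinset_card _ hfin]
    exact finset_bound a b hKb _ fun x hx => hfin.mem_toFinset.mp hx
  · rw [Set.Infinite.ncard hfin]
    exact Nat.zero_le _
end
end

section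
/- There are constants 0.3 and 5.5 such that for all sufficiently large r, the number of vertices of the convex hull of the integer points in the disc of radius r centered at the origin satisfies 0.3 · r^{2/3} < f_0(I(rB^2)) < 5.5 · r^{2/3}. -/
open MeasureTheory Set Filter
noncomputable section

namespace HD
open Classical in
/-- integer points of the disc of radius `x` -/
def disc (x : ℝ) : Finset (ℤ × ℤ) :=
  ((Finset.Icc (-⌊x⌋) ⌊x⌋) ×ˢ (Finset.Icc (-⌊x⌋) ⌊x⌋)).filter
    (fun p => (p.1 : ℝ) ^ 2 + (p.2 : ℝ) ^ 2 ≤ x ^ 2)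

lemma mem_disc {x : ℝ} (hx : 0 ≤ x) (p : ℤ × ℤ) :
    p ∈ disc x ↔ (p.1 : ℝ) ^ 2 + (p.2 : ℝ) ^ 2 ≤ x ^ 2 := by
  have key : ∀ a b : ℤ, (a : ℝ) ^ 2 + (b : ℝ) ^ 2 ≤ x ^ 2 → -⌊x⌋ ≤ a ∧ a ≤ ⌊x⌋ := by
    intro a b h
    have h1 : |(a : ℝ)| ≤ x := abs_le_of_sq_le_sq (by nlinarith [sq_nonneg (b : ℝ)]) hx
    rw [abs_le] at h1
    constructor
    · have : -a ≤ ⌊x⌋ := Int.le_floor.2 (by push_cast; linarith)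
      linarith
    · exact Int.le_floor.2 h1.2
  simp only [disc, Finset.mem_filter, Finset.mem_product, Finset.mem_Icc, and_iff_right_iff_imp]
  intro h
  exact ⟨key _ _ h, key _ p.1 (by linarith)⟩

lemma card_disc_le {x : ℝ} (hx : 1 ≤ x) : ((disc x).card : ℝ) ≤ 9 * x ^ 2 := by
  have h1 : (disc x).card ≤ (2 * ⌊x⌋ + 1).toNat * (2 * ⌊x⌋ + 1).toNat := by
    refine (Finset.card_filter_le _ _).trans ?_
    rw [Finset.card_product, Int.card_Icc]
    have : (⌊x⌋ + 1 - -⌊x⌋) = 2 * ⌊x⌋ + 1 := by ring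
    rw [this]
  have hf : 1 ≤ ⌊x⌋ := Int.le_floor.2 (by simpa using hx)
  have h2 : (((2 * ⌊x⌋ + 1).toNat : ℕ) : ℝ) = 2 * (⌊x⌋ : ℝ) + 1 := by
    have : (((2 * ⌊x⌋ + 1).toNat : ℕ) : ℤ) = 2 * ⌊x⌋ + 1 := Int.toNat_of_nonneg (by linarith)
    exact_mod_cast congrArg (Int.cast : ℤ → ℝ) this
  have h3 : ((disc x).card : ℝ) ≤ (2 * (⌊x⌋ : ℝ) + 1) * (2 * (⌊x⌋ : ℝ) + 1) := by
    rw [← h2]; exact_mod_cast h1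
  have h4 : (⌊x⌋ : ℝ) ≤ x := Int.floor_le x
  have h5 : (1 : ℝ) ≤ ⌊x⌋ := by exact_mod_cast hf
  nlinarith

open Pointwise in
lemma gauss : Tendsto (fun x : ℝ => ((disc x).card : ℝ) / x ^ 2) atTop (nhds Real.pi) := by
  set s : Set (Fin 2 → ℝ) := {v | v 0 ^ 2 + v 1 ^ 2 ≤ 1} with hs
  have hpre : s = (WithLp.toLp 2) ⁻¹' (Metric.closedBall (0 : EuclideanSpace ℝ (Fin 2)) 1) := by
    ext v
    simp only [hs, mem_ofPred_eq, mem_preimage, Metric.mem_closedBall, dist_zero_right,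
      EuclideanSpace.norm_eq, Fin.sum_univ_two, Real.norm_eq_abs, sq_abs]
    rw [Real.sqrt_le_iff]; norm_num
  have hconv : Convex ℝ s := by
    rw [hpre]
    exact (convex_closedBall _ _).is_linear_preimage
      (f := WithLp.toLp 2) ⟨fun x y => rfl, fun c x => rfl⟩
  have hmeas : MeasurableSet s := by
    rw [hpre]
    exact (PiLp.volume_preserving_toLp (Fin 2)).measurable measurableSet_closedBall
  have hbdd : Bornology.IsBounded s := by
    refine (Metric.isBounded_closedBall (x := (0 : Fin 2 → ℝ)) (r := 1)).subset ?_
    intro v hv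
    simp only [hs, mem_ofPred_eq] at hv
    rw [mem_closedBall_zero_iff, pi_norm_le_iff_of_nonneg zero_le_one]
    intro i
    rw [Real.norm_eq_abs]
    apply abs_le_of_sq_le_sq _ zero_le_one
    fin_cases i
    · show v 0 ^ 2 ≤ 1 ^ 2
      nlinarith [sq_nonneg (v 1)]
    · show v 1 ^ 2 ≤ 1 ^ 2
      nlinarith [sq_nonneg (v 0)]
  have hvol : volume.real s = Real.pi := by
    rw [Measure.real, hpre, (PiLp.volume_preserving_toLp (Fin 2)).measure_preimage
      measurableSet_closedBall.nullMeasurableSet]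
    simp [Real.pi_pos.le]
  have hmono : ∀ ⦃x y : ℝ⦄, 0 < x → x ≤ y → x • s ⊆ y • s := by
    intro x y hx hxy v hv
    have hy : 0 < y := hx.trans_le hxy
    rw [mem_smul_set_iff_inv_smul_mem₀ hx.ne'] at hv
    rw [mem_smul_set_iff_inv_smul_mem₀ hy.ne']
    simp only [hs, mem_ofPred_eq, Pi.smul_apply, smul_eq_mul] at hv ⊢
    have : y⁻¹ ^ 2 ≤ x⁻¹ ^ 2 := by gcongr
    nlinarith [sq_nonneg (v 0), sq_nonneg (v 1)]
  have main := tendsto_card_div_pow_atTop_volume' s hbdd hmeas (hconv.addHaar_frontier volume) hmono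
  rw [hvol] at main
  refine main.congr' ?_
  filter_upwards [eventually_gt_atTop 0] with x hx
  have himg : s ∩ x⁻¹ • (Submodule.span ℤ (Set.range (Pi.basisFun ℝ (Fin 2))) : Set (Fin 2 → ℝ))
      = (fun p : ℤ × ℤ => (![x⁻¹ * p.1, x⁻¹ * p.2] : Fin 2 → ℝ)) '' (disc x : Set (ℤ × ℤ)) := by
    ext v
    rw [mem_inter_iff, mem_smul_set_iff_inv_smul_mem₀ (inv_ne_zero hx.ne')]
    simp only [SetLike.mem_coe, inv_inv, Module.Basis.mem_span_iff_repr_mem, Pi.basisFun_repr,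
      Fin.forall_fin_two, mem_image, mem_disc hx.le, hs, mem_ofPred_eq, Pi.smul_apply, smul_eq_mul]
    constructor
    · rintro ⟨h1, ⟨a, ha⟩, ⟨b, hb⟩⟩
      simp at ha hb
      refine ⟨(a, b), ?_, ?_⟩
      · simp only [ha, hb]
        nlinarith [sq_nonneg x]
      · ext i
        fin_cases i
        · simp [ha]; field_simp
        · simp [hb]; field_simp
    · rintro ⟨⟨a, b⟩, h, rfl⟩
      refine ⟨?_, ⟨a, ?_⟩, ⟨b, ?_⟩⟩
      · simp only [Matrix.cons_val_zero, Matrix.cons_val_one]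
        rw [mul_pow, mul_pow, ← mul_add]
        calc x⁻¹ ^ 2 * ((a:ℝ) ^ 2 + (b:ℝ) ^ 2) ≤ x⁻¹ ^ 2 * x ^ 2 := by gcongr
          _ = 1 := by field_simp
      · simp; field_simp
      · simp; field_simp
  rw [himg, Nat.card_image_of_injective]
  · simp
  · rintro ⟨a, b⟩ ⟨c, d⟩ h
    have h0 := congrFun h 0
    have h1 := congrFun h 1
    simp [hx.ne'] at h0 h1
    simp [h0, h1]

/-- primitive vectors of length at most `x` -/
def prim (x : ℝ) : Finset (ℤ × ℤ) := (disc x).filter (fun p => Int.gcd p.1 p.2 = 1)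

def nz (x : ℝ) : Finset (ℤ × ℤ) := (disc x).filter (fun p => p ≠ 0)

lemma nz_card {x : ℝ} (hx : 0 ≤ x) : ((nz x).card : ℝ) = (disc x).card - 1 := by
  have : nz x = (disc x).erase 0 := by
    ext p; simp [nz, and_comm]
  have h0 : (0 : ℤ × ℤ) ∈ disc x := by rw [mem_disc hx]; simp; positivity
  rw [this, Finset.card_erase_of_mem h0, Nat.cast_sub (Finset.card_pos.2 ⟨_, h0⟩)]
  simp

lemma nz_lt_one {x : ℝ} (hx : 0 ≤ x) (hx1 : x < 1) : (nz x).card = 0 := by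
  rw [Finset.card_eq_zero, Finset.eq_empty_iff_forall_notMem]
  rintro ⟨a, b⟩ h
  simp only [nz, Finset.mem_filter, mem_disc hx] at h
  obtain ⟨h1, h2⟩ := h
  have h3 : (a : ℝ) ^ 2 + (b : ℝ) ^ 2 < 1 := by nlinarith
  have h4 : a ^ 2 + b ^ 2 < 1 := by exact_mod_cast h3
  apply h2
  have ha : a = 0 := by nlinarith [sq_nonneg a, sq_nonneg b, sq_nonneg (a-1), sq_nonneg (a+1)]
  have hb : b = 0 := by nlinarith [sq_nonneg a, sq_nonneg b, sq_nonneg (a-1), sq_nonneg (a+1)]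
  simp [ha, hb]

lemma nz_le {x : ℝ} (hx : 0 ≤ x) : ((nz x).card : ℝ) ≤ 9 * x ^ 2 := by
  rcases lt_or_ge x 1 with h | h
  · rw [nz_lt_one hx h]; simp; positivity
  · rw [nz_card hx]; linarith [card_disc_le h]

lemma nz_tendsto : Tendsto (fun x : ℝ => ((nz x).card : ℝ) / x ^ 2) atTop (nhds Real.pi) := by
  have h2 : Tendsto (fun x : ℝ => 1 / x ^ 2) atTop (nhds 0) := by
    have := (tendsto_pow_atTop (α := ℝ) (n := 2) (by norm_num)).inv_tendsto_atTop
    refine this.congr fun x => ?_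
    simp
  have := gauss.sub h2
  rw [sub_zero] at this
  refine this.congr' ?_
  filter_upwards [eventually_ge_atTop 0] with x hx
  rw [nz_card hx]; ring

open ArithmeticFunction in
lemma sum_moebius (n : ℕ) : ∑ d ∈ n.divisors, (moebius d) = if n = 1 then 1 else 0 := by
  have := congrArg (fun f => f n) moebius_mul_coe_zeta
  simp only [coe_mul_zeta_apply, one_apply] at this
  exact this

open ArithmeticFunction in
lemma prim_eq {x : ℝ} (hx : 0 < x) (D : ℕ) (hD : x < D) :
    ((prim x).card : ℤ) = ∑ d ∈ Finset.Icc 1 D, moebius d * ((nz (x / d)).card : ℤ) := by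
  have h1 : ((prim x).card : ℤ) = ∑ p ∈ nz x, if Int.gcd p.1 p.2 = 1 then (1:ℤ) else 0 := by
    rw [← Finset.sum_filter, Finset.sum_const, nsmul_eq_mul, mul_one]
    congr 2
    ext p
    simp only [prim, nz, Finset.mem_filter]
    constructor
    · rintro ⟨h, h'⟩
      refine ⟨⟨h, ?_⟩, h'⟩
      rintro rfl
      simp at h'
    · rintro ⟨⟨h, _⟩, h'⟩
      exact ⟨h, h'⟩
  have h2 : ∀ p ∈ nz x, (if Int.gcd p.1 p.2 = 1 then (1:ℤ) else 0)
      = ∑ d ∈ Finset.Icc 1 D, if d ∣ Int.gcd p.1 p.2 then moebius d else 0 := by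
    intro p hp
    rw [← sum_moebius, ← Finset.sum_filter]
    apply Finset.sum_congr _ (fun _ _ => rfl)
    simp only [nz, Finset.mem_filter, mem_disc hx.le] at hp
    ext d
    simp only [Nat.mem_divisors, Finset.mem_filter, Finset.mem_Icc]
    have hg : Int.gcd p.1 p.2 ≠ 0 := by
      intro h
      rw [Int.gcd_eq_zero_iff] at h
      exact hp.2 (Prod.ext h.1 h.2)
    constructor
    · rintro ⟨h, -⟩
      refine ⟨⟨Nat.pos_of_ne_zero (fun h0 => hg (by simpa [h0] using h)), ?_⟩, h⟩
      have hd1 : (d : ℤ) ∣ p.1 := (Int.natCast_dvd_natCast.2 h).trans (Int.gcd_dvd_left ..)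
      have hd2 : (d : ℤ) ∣ p.2 := (Int.natCast_dvd_natCast.2 h).trans (Int.gcd_dvd_right ..)
      obtain ⟨a, ha⟩ := hd1
      obtain ⟨b, hb⟩ := hd2
      have hab : 1 ≤ a ^ 2 + b ^ 2 := by
        by_contra hcon
        have h4 : a ^ 2 + b ^ 2 < 1 := by linarith
        have ha0 : a = 0 := by nlinarith [sq_nonneg a, sq_nonneg b]
        have hb0 : b = 0 := by nlinarith [sq_nonneg a, sq_nonneg b]
        exact hp.2 (Prod.ext (by simp [ha, ha0]) (by simp [hb, hb0]))
      have hR : (1:ℝ) ≤ (a:ℝ) ^ 2 + (b:ℝ) ^ 2 := by exact_mod_cast hab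
      have h5 : (d:ℝ) ^ 2 ≤ x ^ 2 := by
        have := hp.1
        rw [ha, hb] at this
        push_cast at this
        nlinarith [sq_nonneg (d:ℝ)]
      have h6 : (d:ℝ) ≤ x := abs_le_of_sq_le_sq h5 hx.le |> le_of_abs_le
      exact_mod_cast (h6.trans hD.le)
    · rintro ⟨-, h⟩
      exact ⟨h, hg⟩
  rw [h1, Finset.sum_congr rfl h2, Finset.sum_comm]
  apply Finset.sum_congr rfl
  intro d hd
  rw [Finset.mem_Icc] at hd
  have hd0 : (0:ℝ) < d := by exact_mod_cast hd.1
  rw [← Finset.sum_filter, Finset.sum_const, nsmul_eq_mul, mul_comm]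
  congr 2
  symm
  have hinj : Function.Injective (fun p : ℤ × ℤ => ((d:ℤ) * p.1, (d:ℤ) * p.2)) := by
    rintro ⟨a, b⟩ ⟨a', b'⟩ h
    have : d ≠ 0 := by omega
    simpa [this] using h
  rw [← Finset.card_image_of_injective _ hinj]
  congr 1
  ext ⟨a, b⟩
  simp only [nz, Finset.mem_image, Finset.mem_filter, mem_disc hx.le,
    mem_disc (div_pos hx hd0).le, Prod.mk.injEq]
  constructor
  · rintro ⟨⟨a', b'⟩, ⟨h1, h2⟩, rfl, rfl⟩
    refine ⟨⟨?_, ?_⟩, ?_⟩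
    · push_cast
      rw [div_pow, le_div_iff₀ (by positivity)] at h1
      simp only at h1
      linarith
    · have : d ≠ 0 := by omega
      intro h
      apply h2
      simpa [this, Prod.ext_iff] using h
    · rw [← Int.natCast_dvd_natCast]
      exact Int.dvd_coe_gcd (dvd_mul_right _ _) (dvd_mul_right _ _)
  · rintro ⟨⟨h1, h2⟩, h3⟩
    have hd1 : (d : ℤ) ∣ a := (Int.natCast_dvd_natCast.2 h3).trans (Int.gcd_dvd_left ..)
    have hd2 : (d : ℤ) ∣ b := (Int.natCast_dvd_natCast.2 h3).trans (Int.gcd_dvd_right ..)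
    obtain ⟨a', rfl⟩ := hd1
    obtain ⟨b', rfl⟩ := hd2
    refine ⟨(a', b'), ⟨?_, ?_⟩, rfl, rfl⟩
    · rw [div_pow, le_div_iff₀ (by positivity)]
      push_cast at h1
      simp only
      linarith
    · intro h
      apply h2
      simp only [Prod.mk_eq_zero] at h
      simp [h.1, h.2]

open ArithmeticFunction in
lemma moebius_tsum : ∑' d : ℕ, (moebius d : ℝ) * (Real.pi / (d:ℝ) ^ 2) = 6 / Real.pi := by
  have h := LSeries_zeta_mul_Lseries_moebius (s := 2) (by norm_num)
  rw [LSeries_zeta_eq_riemannZeta (by norm_num), riemannZeta_two] at h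
  have h3 : LSeries (fun n => (moebius n : ℂ)) 2 =
      ((∑' d : ℕ, (moebius d : ℝ) * (1 / (d:ℝ) ^ 2) : ℝ) : ℂ) := by
    rw [Complex.ofReal_tsum, LSeries]
    congr 1
    ext d
    rcases eq_or_ne d 0 with rfl | hd
    · simp
    · rw [LSeries.term_of_ne_zero hd]
      push_cast
      rw [show ((2:ℂ)) = ((2:ℕ):ℂ) by norm_num, Complex.cpow_natCast]
      ring
  rw [h3] at h
  have h4 : (Real.pi ^ 2 / 6) * (∑' d : ℕ, (moebius d : ℝ) * (1 / (d:ℝ) ^ 2)) = 1 := by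
    exact_mod_cast h
  have h5 : ∀ d : ℕ, (moebius d : ℝ) * (Real.pi / (d:ℝ) ^ 2) =
      Real.pi * ((moebius d : ℝ) * (1 / (d:ℝ) ^ 2)) := fun d => by ring
  simp_rw [h5]
  rw [tsum_mul_left]
  have := Real.pi_pos
  field_simp
  field_simp at h4
  linarith

open ArithmeticFunction in
lemma prim_tendsto :
    Tendsto (fun x : ℝ => ((prim x).card : ℝ) / x ^ 2) atTop (nhds (6 / Real.pi)) := by
  rw [← moebius_tsum]
  have hsum : Summable (fun d : ℕ => 9 * (1 / (d:ℝ) ^ 2)) :=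
    (Real.summable_one_div_nat_pow.2 (by norm_num)).mul_left 9
  have key := tendsto_tsum_of_dominated_convergence (𝓕 := (atTop : Filter ℝ))
    (f := fun (x : ℝ) (d : ℕ) => (moebius d : ℝ) * (((nz (x / d)).card : ℝ) / x ^ 2))
    (g := fun d : ℕ => (moebius d : ℝ) * (Real.pi / (d:ℝ) ^ 2))
    (bound := fun d : ℕ => 9 * (1 / (d:ℝ) ^ 2)) hsum ?_ ?_
  · refine key.congr' ?_
    filter_upwards [eventually_gt_atTop 0] with x hx
    obtain ⟨D, hD⟩ := exists_nat_gt x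
    have h := prim_eq hx D hD
    have h' : ((prim x).card : ℝ) =
        ∑ d ∈ Finset.Icc 1 D, (moebius d : ℝ) * ((nz (x / d)).card : ℝ) := by
      exact_mod_cast congrArg (Int.cast : ℤ → ℝ) h
    rw [h', Finset.sum_div]
    rw [tsum_eq_sum (s := Finset.Icc 1 D)]
    · apply Finset.sum_congr rfl
      intro d _
      ring
    · intro d hd
      rcases Nat.eq_zero_or_pos d with rfl | hd0
      · simp
      · have : D < d := by
          by_contra hcon
          exact hd (Finset.mem_Icc.2 ⟨hd0, not_lt.1 hcon⟩)
        have hlt : x < d := hD.trans (by exact_mod_cast this)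
        have hdp : (0:ℝ) < d := by exact_mod_cast hd0
        rw [nz_lt_one (div_pos hx hdp).le ((div_lt_one hdp).2 hlt)]
        simp
  · intro d
    rcases Nat.eq_zero_or_pos d with rfl | hd0
    · simp
    · have hdp : (0:ℝ) < d := by exact_mod_cast hd0
      have h1 := nz_tendsto.comp (tendsto_id.atTop_div_const hdp)
      have h2 := (h1.mul_const (1 / (d:ℝ) ^ 2)).const_mul (moebius d : ℝ)
      rw [show Real.pi * (1 / (d:ℝ) ^ 2) = Real.pi / (d:ℝ) ^ 2 by ring] at h2
      refine h2.congr' ?_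
      filter_upwards [eventually_gt_atTop 0] with x hx
      simp only [Function.comp, id]
      field_simp
  · filter_upwards [eventually_gt_atTop 0] with x hx
    intro d
    rcases Nat.eq_zero_or_pos d with rfl | hd0
    · simp
    · have hdp : (0:ℝ) < d := by exact_mod_cast hd0
      rw [norm_mul, Real.norm_eq_abs, Real.norm_eq_abs]
      have h1 : |(moebius d : ℝ)| ≤ 1 := by exact_mod_cast abs_moebius_le_one (n := d)
      have h2 : |((nz (x / d)).card : ℝ) / x ^ 2| ≤ 9 * (1 / (d:ℝ) ^ 2) := by
        rw [abs_of_nonneg (by positivity), div_le_iff₀ (by positivity)]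
        refine (nz_le (div_pos hx hdp).le).trans (le_of_eq ?_)
        field_simp
      calc _ ≤ 1 * (9 * (1 / (d:ℝ) ^ 2)) := by gcongr
        _ = _ := one_mul _
end HD

namespace HD
def dt (a b : ℤ × ℤ) : ℤ := a.1 * b.2 - a.2 * b.1
def ip (a b : ℤ × ℤ) : ℤ := a.1 * b.1 + a.2 * b.2

def isVert (r : ℝ) (v : ℤ × ℤ) : Prop :=
  v ∈ disc r ∧ ∃ α β : ℝ, ∀ p ∈ disc r, p ≠ v →
    0 < α * ((p.1 : ℝ) - v.1) + β * ((p.2 : ℝ) - v.2)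

/-- `v` is the starting point of the face in direction `w` -/
def IsLex (r : ℝ) (w v : ℤ × ℤ) : Prop :=
  v ∈ disc r ∧ ∀ p ∈ disc r, 0 ≤ dt w (p - v) ∧ (dt w (p - v) = 0 → 0 ≤ ip w (p - v))

lemma lagrange (a b : ℤ × ℤ) : dt a b ^ 2 + ip a b ^ 2 = (a.1 ^ 2 + a.2 ^ 2) * (b.1 ^ 2 + b.2 ^ 2) := by
  simp only [dt, ip]; ring

lemma sq_pos_of_ne {a : ℤ × ℤ} (h : a ≠ 0) : 0 < a.1 ^ 2 + a.2 ^ 2 := by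
  rcases lt_or_eq_of_le (show 0 ≤ a.1 ^ 2 + a.2 ^ 2 by positivity) with h1 | h1
  · exact h1
  · exfalso
    apply h
    have h2 : a.1 ^ 2 = 0 := by nlinarith [sq_nonneg a.1, sq_nonneg a.2]
    have h3 : a.2 ^ 2 = 0 := by nlinarith [sq_nonneg a.1, sq_nonneg a.2]
    exact Prod.ext (pow_eq_zero_iff two_ne_zero |>.1 h2) (pow_eq_zero_iff two_ne_zero |>.1 h3)

lemma lex_isVert {r : ℝ} {w v : ℤ × ℤ} (σ : ℤ) (hσ : σ ^ 2 = 1) (hw : w ≠ 0) (hv : v ∈ disc r)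
    (h : ∀ p ∈ disc r, 0 ≤ dt w (p - v) ∧ (dt w (p - v) = 0 → 0 ≤ σ * ip w (p - v))) :
    isVert r v := by
  refine ⟨hv, ?_⟩
  set K : ℤ := 1 + ∑ p ∈ disc r, |σ * ip w (p - v)| with hK
  refine ⟨((K * (-w.2) + σ * w.1 : ℤ) : ℝ), ((K * w.1 + σ * w.2 : ℤ) : ℝ), ?_⟩
  intro p hp hpv
  have hK1 : |σ * ip w (p - v)| < K := by
    have := Finset.single_le_sum (f := fun p => |σ * ip w (p - v)|)
      (fun i _ => abs_nonneg _) hp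
    linarith
  have goal : 0 < K * dt w (p - v) + σ * ip w (p - v) := by
    obtain ⟨h1, h2⟩ := h p hp
    rcases h1.lt_or_eq with h3 | h3
    · have := neg_abs_le (σ * ip w (p - v))
      have hK0 : 0 < K := lt_of_le_of_lt (abs_nonneg _) hK1
      nlinarith
    · have h4 := h2 h3.symm
      rw [← h3]
      have h5 := lagrange w (p - v)
      rw [← h3] at h5
      have h6 := sq_pos_of_ne hw
      have h7 := sq_pos_of_ne (sub_ne_zero.2 hpv)
      have h8 : σ * ip w (p - v) ≠ 0 := by
        intro h0
        have : (σ * ip w (p - v)) ^ 2 = 0 := by rw [h0]; rfl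
        rw [mul_pow, hσ] at this
        have := mul_pos h6 h7
        linarith
      have := lt_of_le_of_ne h4 (Ne.symm h8)
      linarith
  have e : ((K * (-w.2) + σ * w.1 : ℤ) : ℝ) * ((p.1 : ℝ) - v.1) +
      ((K * w.1 + σ * w.2 : ℤ) : ℝ) * ((p.2 : ℝ) - v.2) =
      ((K * dt w (p - v) + σ * ip w (p - v) : ℤ) : ℝ) := by
    simp only [dt, ip, Prod.fst_sub, Prod.snd_sub]
    push_cast; ring
  rw [e]
  exact_mod_cast goal

lemma dt_sub (w p v : ℤ × ℤ) : dt w (p - v) = dt w p - dt w v := by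
  simp only [dt, Prod.fst_sub, Prod.snd_sub]; ring

lemma ip_sub (w p v : ℤ × ℤ) : ip w (p - v) = ip w p - ip w v := by
  simp only [ip, Prod.fst_sub, Prod.snd_sub]; ring

lemma zero_mem_disc {r : ℝ} (hr : 0 ≤ r) : (0 : ℤ × ℤ) ∈ disc r := by
  rw [mem_disc hr]; simp; positivity

lemma exists_lex {r : ℝ} (hr : 0 ≤ r) (w : ℤ × ℤ) : ∃ v, IsLex r w v := by
  obtain ⟨v, hv, hmin⟩ := Finset.exists_min_image (disc r)
    (fun p => toLex (dt w p, ip w p)) ⟨0, zero_mem_disc hr⟩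
  refine ⟨v, hv, fun p hp => ?_⟩
  have := hmin p hp
  rw [Prod.Lex.toLex_le_toLex] at this
  rw [dt_sub, ip_sub]
  simp only at this
  constructor
  · rcases this with h | h <;> omega
  · intro h0
    rcases this with h | h <;> omega

lemma IsLex.isVert {r : ℝ} {w v : ℤ × ℤ} (h : IsLex r w v) (hw : w ≠ 0) : isVert r v :=
  lex_isVert 1 (by norm_num) hw h.1 (fun p hp => by simpa using h.2 p hp)

/-- convexity of the disc along integer points -/
lemma disc_conv {r : ℝ} (hr : 0 ≤ r) {v d : ℤ × ℤ} {k g : ℤ} (hk : 0 ≤ k) (hkg : k ≤ g)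
    (hv : v ∈ disc r) (h : v + g • d ∈ disc r) : v + k • d ∈ disc r := by
  rw [mem_disc hr] at *
  simp only [Prod.fst_add, Prod.snd_add, Prod.smul_fst, Prod.smul_snd, smul_eq_mul] at *
  push_cast at *
  rcases eq_or_lt_of_le hk with rfl | hk0
  · simpa using hv
  have hk0' : (0:ℝ) < k := by exact_mod_cast hk0
  have hkg' : (k:ℝ) ≤ g := by exact_mod_cast hkg
  have hg : (0:ℝ) < g := by linarith
  have : (g:ℝ) * (((v.1:ℝ) + k * d.1) ^ 2 + ((v.2:ℝ) + k * d.2) ^ 2) ≤ g * r ^ 2 := by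
    have h1 : (g:ℝ) * (((v.1:ℝ) + k * d.1) ^ 2 + ((v.2:ℝ) + k * d.2) ^ 2) =
      (g - k) * ((v.1:ℝ) ^ 2 + (v.2:ℝ) ^ 2) + k * (((v.1:ℝ) + g * d.1) ^ 2 + ((v.2:ℝ) + g * d.2) ^ 2)
        - k * g * (g - k) * ((d.1:ℝ) ^ 2 + (d.2:ℝ) ^ 2) := by ring
    have h2 : 0 ≤ k * g * (g - k) * ((d.1:ℝ) ^ 2 + (d.2:ℝ) ^ 2) := by
      have : (0:ℝ) ≤ g - k := by linarith
      positivity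
    nlinarith
  exact le_of_mul_le_mul_left this hg

lemma exists_out {r : ℝ} (hr : 1 ≤ r) {v : ℤ × ℤ} (h : isVert r v) :
    ∃ w : ℤ × ℤ, Int.gcd w.1 w.2 = 1 ∧ v + w ∈ disc r ∧ IsLex r w v := by
  have hr0 : 0 ≤ r := by linarith
  obtain ⟨hv, α, β, hf⟩ := h
  have hne : ((disc r).filter (fun p => p ≠ v)).Nonempty := by
    by_cases h0 : v = 0
    · refine ⟨(1, 0), ?_⟩
      rw [Finset.mem_filter, mem_disc hr0, h0]
      refine ⟨?_, by simp⟩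
      simp only [Int.cast_one, Int.cast_zero]
      nlinarith
    · exact ⟨0, by rw [Finset.mem_filter]; exact ⟨zero_mem_disc hr0, Ne.symm h0⟩⟩
  obtain ⟨q, hq, hmin⟩ := Finset.exists_min_image _
    (fun p : ℤ × ℤ => (-β * ((p.1 : ℝ) - v.1) + α * ((p.2 : ℝ) - v.2)) /
      (α * ((p.1 : ℝ) - v.1) + β * ((p.2 : ℝ) - v.2))) hne
  rw [Finset.mem_filter] at hq
  have hfq := hf q hq.1 hq.2
  have hab : 0 < α ^ 2 + β ^ 2 := by
    by_contra hcon
    have h1 : α = 0 := by nlinarith [sq_nonneg α, sq_nonneg β]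
    have h2 : β = 0 := by nlinarith [sq_nonneg α, sq_nonneg β]
    rw [h1, h2] at hfq
    simp at hfq
  -- minimality in terms of determinants
  have hdet : ∀ p ∈ disc r, 0 ≤ dt (q - v) (p - v) := by
    intro p hp
    by_cases hpv : p = v
    · simp [hpv, dt]
    have hfp := hf p hp hpv
    have h1 := hmin p (by rw [Finset.mem_filter]; exact ⟨hp, hpv⟩)
    rw [div_le_div_iff₀ hfq hfp] at h1
    have h2 : 0 ≤ (α ^ 2 + β ^ 2) * ((dt (q - v) (p - v) : ℤ) : ℝ) := by
      simp only [dt, Prod.fst_sub, Prod.snd_sub]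
      push_cast
      nlinarith
    have h3 := nonneg_of_mul_nonneg_right h2 hab
    exact_mod_cast h3
  have hd0 : q - v ≠ 0 := sub_ne_zero.2 hq.2
  set d := q - v with hd
  have hg0 : 0 < Int.gcd d.1 d.2 := by
    rw [Int.gcd_pos_iff]
    by_contra hcon
    push Not at hcon
    exact hd0 (Prod.ext hcon.1 hcon.2)
  obtain ⟨w1, w2, hcop, h1, h2⟩ := Int.exists_gcd_one hg0
  set g := Int.gcd d.1 d.2 with hg
  have hgz : (0:ℤ) < g := by exact_mod_cast hg0
  have hdw : d = (g:ℤ) • ((w1, w2) : ℤ × ℤ) := by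
    refine Prod.ext ?_ ?_
    · simp; linarith
    · simp; linarith
  refine ⟨(w1, w2), hcop, ?_, hv, ?_⟩
  · have := disc_conv hr0 (v := v) (d := (w1, w2)) (k := 1) (g := g) (by norm_num) (by omega) hv
      (by rw [← hdw, hd]; simpa using hq.1)
    simpa using this
  · intro p hp
    have hA : 0 ≤ dt (w1, w2) (p - v) := by
      have := hdet p hp
      rw [hdw] at this
      have e : dt ((g:ℤ) • ((w1, w2) : ℤ × ℤ)) (p - v) = g * dt (w1, w2) (p - v) := by
        simp [dt]; ring
      rw [e] at this
      exact nonneg_of_mul_nonneg_right this hgz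
    refine ⟨hA, fun h0 => ?_⟩
    have hfp : 0 ≤ α * ((p.1 : ℝ) - v.1) + β * ((p.2 : ℝ) - v.2) := by
      by_cases hpv : p = v
      · simp [hpv]
      · exact (hf p hp hpv).le
    have hfw : 0 < α * (w1:ℝ) + β * w2 := by
      have e1 : (q.1:ℝ) - v.1 = g * w1 := by
        have : q.1 - v.1 = g * w1 := by
          have := congrArg Prod.fst hdw; simpa [hd] using this
        exact_mod_cast congrArg (Int.cast : ℤ → ℝ) this
      have e2 : (q.2:ℝ) - v.2 = g * w2 := by
        have : q.2 - v.2 = g * w2 := by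
          have := congrArg Prod.snd hdw; simpa [hd] using this
        exact_mod_cast congrArg (Int.cast : ℤ → ℝ) this
      rw [e1, e2] at hfq
      have hgr : (0:ℝ) < g := by exact_mod_cast hg0
      have : 0 < (g:ℝ) * (α * (w1:ℝ) + β * w2) := by linarith
      exact pos_of_mul_pos_right this hgr.le
    have hid : ((ip (w1, w2) (p - v) : ℤ) : ℝ) * (α * (w1:ℝ) + β * w2) =
        ((w1:ℝ) ^ 2 + (w2:ℝ) ^ 2) * (α * ((p.1 : ℝ) - v.1) + β * ((p.2 : ℝ) - v.2)) := by
      have h0' : ((dt (w1, w2) (p - v) : ℤ) : ℝ) = 0 := by rw [h0]; simp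
      simp only [dt, ip, Prod.fst_sub, Prod.snd_sub] at h0' ⊢
      push_cast at h0' ⊢
      linear_combination (-α * w2 + β * w1) * (-h0')
    have hnn : 0 ≤ ((ip (w1, w2) (p - v) : ℤ) : ℝ) * (α * (w1:ℝ) + β * w2) := by
      rw [hid]; positivity
    have := nonneg_of_mul_nonneg_left hnn hfw
    exact_mod_cast this

open Classical in
/-- the vertices, as integer points -/
def V (r : ℝ) : Finset (ℤ × ℤ) := (disc r).filter (isVert r)

lemma mem_V {r : ℝ} {v : ℤ × ℤ} : v ∈ V r ↔ isVert r v := by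
  simp only [V, Finset.mem_filter, and_iff_right_iff_imp]
  exact fun h => h.1

def emb (p : ℤ × ℤ) : E 2 := WithLp.toLp 2 ![(p.1 : ℝ), (p.2 : ℝ)]

@[simp] lemma emb_zero (p : ℤ × ℤ) : emb p 0 = p.1 := rfl
@[simp] lemma emb_one (p : ℤ × ℤ) : emb p 1 = p.2 := rfl

lemma emb_inj : Function.Injective emb := by
  intro p q h
  have h0 : emb p 0 = emb q 0 := by rw [h]
  have h1 : emb p 1 = emb q 1 := by rw [h]
  simp at h0 h1
  exact Prod.ext h0 h1

lemma emb_disc {r : ℝ} (hr : 0 ≤ r) :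
    intPoints 2 ∩ Metric.closedBall (0 : E 2) r = emb '' (disc r : Set (ℤ × ℤ)) := by
  ext x
  simp only [mem_inter_iff, intPoints, mem_ofPred_eq, Metric.mem_closedBall, dist_zero_right,
    EuclideanSpace.norm_eq, Fin.sum_univ_two, Real.norm_eq_abs, sq_abs, mem_image, SetLike.mem_coe,
    mem_disc hr, Fin.forall_fin_two]
  rw [Real.sqrt_le_left hr]
  constructor
  · rintro ⟨⟨⟨a, ha⟩, ⟨b, hb⟩⟩, h⟩
    refine ⟨(a, b), by rw [ha, hb] at h; exact h, ?_⟩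
    ext i
    fin_cases i
    · exact ha.symm
    · exact hb.symm
  · rintro ⟨p, hp, rfl⟩
    exact ⟨⟨⟨p.1, rfl⟩, ⟨p.2, rfl⟩⟩, hp⟩

lemma bridge {r : ℝ} (hr : 0 ≤ r) :
    numVertices 2 (integerHull 2 (Metric.closedBall (0 : E 2) r)) = (V r).card := by
  have key : Set.extremePoints ℝ (integerHull 2 (Metric.closedBall (0 : E 2) r))
      = emb '' (V r : Set (ℤ × ℤ)) := by
    rw [integerHull, emb_disc hr]
    ext x
    constructor
    · intro hx
      obtain ⟨v, hv, rfl⟩ := extremePoints_convexHull_subset hx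
      refine ⟨v, ?_, rfl⟩
      rw [SetLike.mem_coe, mem_V]
      refine ⟨hv, ?_⟩
      rw [(convex_convexHull ℝ _).mem_extremePoints_iff_mem_sdiff_convexHull_sdiff] at hx
      set T : Set (E 2) := emb '' ((disc r : Set (ℤ × ℤ)) \ {v}) with hT
      have hnot : emb v ∉ convexHull ℝ T := by
        intro hmem
        apply hx.2
        refine convexHull_mono ?_ hmem
        rintro _ ⟨p, hp, rfl⟩
        refine ⟨subset_convexHull ℝ _ ⟨p, hp.1, rfl⟩, ?_⟩
        intro h
        exact hp.2 (emb_inj h)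
      have hfin : T.Finite := ((disc r).finite_toSet.subset Set.sdiff_subset).image _
      obtain ⟨f, u, h1, h2⟩ := geometric_hahn_banach_point_closed (convex_convexHull ℝ T)
        (hfin.isCompact_convexHull (𝕜 := ℝ)).isClosed hnot
      refine ⟨f (EuclideanSpace.single 0 1), f (EuclideanSpace.single 1 1), ?_⟩
      intro p hp hpv
      have h3 := h2 (emb p) (subset_convexHull ℝ _ ⟨p, ⟨hp, hpv⟩, rfl⟩)
      have hdec : ∀ p : ℤ × ℤ, f (emb p) = p.1 * f (EuclideanSpace.single 0 1) +
          p.2 * f (EuclideanSpace.single 1 1) := by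
        intro p
        have : emb p = (p.1:ℝ) • EuclideanSpace.single (0 : Fin 2) (1:ℝ) +
            (p.2:ℝ) • EuclideanSpace.single (1 : Fin 2) (1:ℝ) := by
          ext i
          fin_cases i <;> simp
        rw [this, map_add, map_smul, map_smul]; rfl
      rw [hdec] at h1 h3
      nlinarith
    · rintro ⟨v, hv, rfl⟩
      rw [SetLike.mem_coe, mem_V] at hv
      obtain ⟨hv, α, β, hf⟩ := hv
      set C : Set (E 2) := {y | y = emb v ∨ 0 < α * (y 0 - v.1) + β * (y 1 - v.2)} with hC
      have hCconv : Convex ℝ C := by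
        rw [convex_iff_forall_pos]
        intro x hx y hy a b ha hb hab
        have e : α * ((a • x + b • y) 0 - v.1) + β * ((a • x + b • y) 1 - v.2) =
            a * (α * (x 0 - v.1) + β * (x 1 - v.2)) + b * (α * (y 0 - v.1) + β * (y 1 - v.2)) := by
          simp only [PiLp.add_apply, PiLp.smul_apply, smul_eq_mul]
          have : b = 1 - a := by linarith
          subst this
          ring
        rcases hx with rfl | hx
        · rcases hy with rfl | hy
          · left
            rw [← add_smul, hab, one_smul]
          · right
            rw [e]
            simp only [emb_zero, emb_one, sub_self, mul_zero, add_zero, zero_add]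
            positivity
        · right
          rw [e]
          rcases hy with rfl | hy
          · simp only [emb_zero, emb_one, sub_self, mul_zero, add_zero]
            positivity
          · positivity
      have hsub : convexHull ℝ (emb '' (disc r : Set (ℤ × ℤ))) ⊆ C := by
        apply convexHull_min _ hCconv
        rintro _ ⟨p, hp, rfl⟩
        by_cases hpv : p = v
        · left; rw [hpv]
        · right; exact hf p hp hpv
      rw [mem_extremePoints_iff_left]
      refine ⟨subset_convexHull ℝ _ ⟨v, hv, rfl⟩, ?_⟩
      rintro x hx y hy ⟨a, b, ha, hb, hab, hxy⟩
      rcases hsub hx with h | h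
      · exact h
      exfalso
      have e : α * ((a • x + b • y) 0 - v.1) + β * ((a • x + b • y) 1 - v.2) =
            a * (α * (x 0 - v.1) + β * (x 1 - v.2)) + b * (α * (y 0 - v.1) + β * (y 1 - v.2)) := by
          simp only [PiLp.add_apply, PiLp.smul_apply, smul_eq_mul]
          have : b = 1 - a := by linarith
          subst this
          ring
      rw [hxy] at e
      simp only [emb_zero, emb_one, sub_self, mul_zero, add_zero] at e
      have h2 : 0 ≤ α * (y 0 - v.1) + β * (y 1 - v.2) := by
        rcases hsub hy with rfl | h'
        · simp
        · exact h'.le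
      have h3 := mul_pos ha h
      have h4 := mul_nonneg hb.le h2
      linarith
  rw [numVertices, key, Set.ncard_image_of_injective _ emb_inj, Set.ncard_coe_finset]
end HD

namespace HD

lemma prim_par {w w' : ℤ × ℤ} (h : Int.gcd w.1 w.2 = 1) (h' : Int.gcd w'.1 w'.2 = 1)
    (hd : dt w w' = 0) : w' = w ∨ w' = -w := by
  have hc : IsCoprime w.1 w.2 := Int.isCoprime_iff_gcd_eq_one.2 h
  have hc' : IsCoprime w'.1 w'.2 := Int.isCoprime_iff_gcd_eq_one.2 h'
  obtain ⟨x, y, hxy⟩ := hc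
  simp only [dt] at hd
  have e1 : w'.1 = (x * w'.1 + y * w'.2) * w.1 := by
    linear_combination (-w'.1) * hxy - y * hd
  have e2 : w'.2 = (x * w'.1 + y * w'.2) * w.2 := by
    linear_combination (-w'.2) * hxy + x * hd
  have hu := hc'.isUnit_of_dvd' (Dvd.intro _ e1.symm) (Dvd.intro _ e2.symm)
  rcases Int.isUnit_iff.1 hu with h1 | h1
  · left
    rw [h1, one_mul] at e1 e2
    exact Prod.ext e1 e2
  · right
    rw [h1] at e1 e2
    exact Prod.ext (by simpa using e1) (by simpa using e2)

lemma ne_zero_of_prim {w : ℤ × ℤ} (h : Int.gcd w.1 w.2 = 1) : w ≠ 0 := by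
  rintro rfl
  simp at h

/-- squared length -/
def nsq (w : ℤ × ℤ) : ℝ := (w.1 : ℝ) ^ 2 + (w.2 : ℝ) ^ 2

lemma nsq_pos {w : ℤ × ℤ} (h : w ≠ 0) : 1 ≤ nsq w := by
  have := sq_pos_of_ne h
  have h2 : 1 ≤ w.1 ^ 2 + w.2 ^ 2 := by omega
  unfold nsq
  exact_mod_cast h2

/-- length -/
def len (w : ℤ × ℤ) : ℝ := Real.sqrt (nsq w)

lemma nsq_nonneg (w : ℤ × ℤ) : 0 ≤ nsq w := by unfold nsq; positivity

lemma len_sq (w : ℤ × ℤ) : len w ^ 2 = nsq w := Real.sq_sqrt (nsq_nonneg w)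

lemma len_nonneg (w : ℤ × ℤ) : 0 ≤ len w := Real.sqrt_nonneg _

lemma one_le_len {w : ℤ × ℤ} (h : w ≠ 0) : 1 ≤ len w := by
  rw [len, Real.one_le_sqrt]; exact nsq_pos h

lemma mem_disc_len {x : ℝ} (hx : 0 ≤ x) (w : ℤ × ℤ) : w ∈ disc x ↔ len w ≤ x := by
  rw [mem_disc hx, len, Real.sqrt_le_left hx]; rfl

lemma lagrange_real (w p : ℤ × ℤ) : ((dt w p : ℤ) : ℝ) ^ 2 + ((ip w p : ℤ) : ℝ) ^ 2 = nsq w * nsq p := by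
  simp only [dt, ip, nsq]; push_cast; ring

lemma mem_disc_iff {r : ℝ} (hr : 0 ≤ r) {w : ℤ × ℤ} (hw : w ≠ 0) (p : ℤ × ℤ) :
    p ∈ disc r ↔ ((dt w p : ℤ) : ℝ) ^ 2 + ((ip w p : ℤ) : ℝ) ^ 2 ≤ nsq w * r ^ 2 := by
  rw [lagrange_real, mem_disc hr]
  have := nsq_pos hw
  exact (mul_le_mul_iff_right₀ (by linarith : 0 < nsq w)).symm

lemma line_pt {w : ℤ × ℤ} (h : Int.gcd w.1 w.2 = 1) (k : ℤ) (X : ℝ) :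
    ∃ p : ℤ × ℤ, dt w p = k ∧ X - nsq w < ((ip w p : ℤ) : ℝ) ∧ ((ip w p : ℤ) : ℝ) ≤ X := by
  obtain ⟨x, y, hxy⟩ := Int.isCoprime_iff_gcd_eq_one.2 h
  set p0 : ℤ × ℤ := (-k * y, k * x) with hp0
  have hW := nsq_pos (ne_zero_of_prim h)
  have hW0 : 0 < nsq w := by linarith
  set j : ℤ := ⌊(X - ((ip w p0 : ℤ) : ℝ)) / nsq w⌋ with hj
  have e : ((ip w (p0 + j • w) : ℤ) : ℝ) = ((ip w p0 : ℤ) : ℝ) + j * nsq w := by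
    simp only [ip, nsq, Prod.fst_add, Prod.snd_add, Prod.smul_fst, Prod.smul_snd, smul_eq_mul]
    push_cast; ring
  refine ⟨p0 + j • w, ?_, ?_, ?_⟩
  · simp only [dt, Prod.fst_add, Prod.snd_add, Prod.smul_fst, Prod.smul_snd, smul_eq_mul, hp0]
    linear_combination k * hxy
  · rw [e]
    have := Int.lt_floor_add_one ((X - ((ip w p0 : ℤ) : ℝ)) / nsq w)
    rw [← hj, div_lt_iff₀ hW0] at this
    linarith
  · rw [e]
    have := Int.floor_le ((X - ((ip w p0 : ℤ) : ℝ)) / nsq w)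
    rw [← hj, le_div_iff₀ hW0] at this
    linarith

lemma cap {r : ℝ} (hr : 0 < r) {w v : ℤ × ℤ} (h : Int.gcd w.1 w.2 = 1) (hl : len w ≤ 2 * r)
    (hv : IsLex r w v) : ((dt w v : ℤ) : ℝ) ≤ -(r * len w - len w ^ 3 / (4 * r) - 1) := by
  have hw := ne_zero_of_prim h
  have hl1 := one_le_len hw
  set l := len w with hldef
  have hB : 0 ≤ r * l - l ^ 3 / (4 * r) := by
    have : l ^ 3 / (4 * r) ≤ r * l := by
      rw [div_le_iff₀ (by positivity)]
      have : l ^ 2 ≤ (2 * r) ^ 2 := by gcongr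
      nlinarith
    linarith
  set B := r * l - l ^ 3 / (4 * r) with hBdef
  obtain ⟨p, hp1, hp2, hp3⟩ := line_pt h (-⌊B⌋) (nsq w / 2)
  have hf0 : (0:ℝ) ≤ ⌊B⌋ := by exact_mod_cast Int.floor_nonneg.2 hB
  have hf1 : (⌊B⌋:ℝ) ≤ B := Int.floor_le B
  have hn : nsq w = l ^ 2 := (len_sq w).symm
  have hpd : p ∈ disc r := by
    rw [mem_disc_iff hr.le hw, hp1]
    push_cast
    have h1 : (-(⌊B⌋:ℝ)) ^ 2 ≤ B ^ 2 := by nlinarith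
    have h2 : ((ip w p : ℤ) : ℝ) ^ 2 ≤ (nsq w / 2) ^ 2 := by
      apply sq_le_sq'
      · linarith
      · linarith
    rw [hn] at h2 ⊢
    have h3 : B ^ 2 = r ^ 2 * l ^ 2 - l ^ 4 / 2 + l ^ 6 / (16 * r ^ 2) := by
      rw [hBdef]; field_simp; ring
    have h4 : l ^ 6 / (16 * r ^ 2) ≤ l ^ 4 / 4 := by
      rw [div_le_iff₀ (by positivity)]
      have : l ^ 2 ≤ (2 * r) ^ 2 := by gcongr
      have h5 : l ^ 4 * l ^ 2 ≤ l ^ 4 * (2 * r) ^ 2 := by gcongr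
      nlinarith
    nlinarith
  have h1 := (hv.2 p hpd).1
  rw [dt_sub, hp1] at h1
  have h2 : dt w v ≤ -⌊B⌋ := by linarith
  have h3 : ((dt w v : ℤ) : ℝ) ≤ -(⌊B⌋:ℝ) := by exact_mod_cast h2
  have := Int.lt_floor_add_one B
  linarith

lemma fiber {c : ℝ} (hc : 10 ≤ c) (v : ℤ × ℤ) (s : Finset (ℤ × ℤ))
    (hs : ∀ w ∈ s, Int.gcd w.1 w.2 = 1 ∧ c ≤ len w ∧ len w ≤ 2 * c ∧ IsLex (c ^ 3) w v) :
    s.card ≤ 15 := by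
  have hc0 : 0 < c := by linarith
  have hc3 : 1000 ≤ c ^ 3 := by
    calc (1000:ℝ) = 10 ^ 3 := by norm_num
      _ ≤ c ^ 3 := by gcongr
  have hcc : c ≤ c ^ 3 := le_self_pow₀ (by linarith) (by norm_num)
  have hneg : ∀ w ∈ s, ((dt w v : ℤ) : ℝ) ≤ -(c ^ 3 * len w - 3) := by
    intro w hw
    obtain ⟨h1, h2, h3, h4⟩ := hs w hw
    have := cap (by positivity) h1 (by linarith) h4
    have h5 : len w ^ 3 / (4 * c ^ 3) ≤ 2 := by
      rw [div_le_iff₀ (by positivity)]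
      calc len w ^ 3 ≤ (2 * c) ^ 3 := by have := len_nonneg w; gcongr
        _ = 2 * (4 * c ^ 3) := by ring
    linarith
  have hneg0 : ∀ w ∈ s, ((dt w v : ℤ) : ℝ) < 0 := by
    intro w hw
    have := hneg w hw
    obtain ⟨h1, h2, h3, h4⟩ := hs w hw
    nlinarith
  have hbound : ∀ w ∈ s, |4 * c ^ 2 * (((ip w v : ℤ) : ℝ) / ((dt w v : ℤ) : ℝ))| ≤ 7 := by
    intro w hw
    have hn := hneg0 w hw
    obtain ⟨h1, h2, h3, h4⟩ := hs w hw
    have hcap := cap (by positivity) h1 (by linarith) h4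
    have hD := hneg w hw
    set d : ℝ := ((dt w v : ℤ) : ℝ) with hd
    set i : ℝ := ((ip w v : ℤ) : ℝ) with hi
    set l := len w with hl
    have hl0 : 0 < l := by linarith
    have hin : d ^ 2 + i ^ 2 ≤ l ^ 2 * (c ^ 3) ^ 2 := by
      have := (mem_disc_iff (by positivity) (ne_zero_of_prim h1) v).1 h4.1
      rw [← len_sq] at this
      exact this
    apply abs_le_of_sq_le_sq _ (by norm_num)
    have e : (4 * c ^ 2 * (i / d)) ^ 2 = 16 * c ^ 4 * i ^ 2 / d ^ 2 := by
      field_simp; ring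
    rw [e, div_le_iff₀ (by nlinarith [sq_nonneg d, mul_pos_of_neg_of_neg hn hn])]
    -- `i ^ 2 ≤ 2 c^3 l + l^4/2`
    set B := c ^ 3 * l - l ^ 3 / (4 * c ^ 3) - 1 with hB
    have hi2 : i ^ 2 ≤ 2 * c ^ 3 * l + l ^ 4 / 2 := by
      have hlarge : c ^ 3 * l ≥ 10000 := by nlinarith
      have hB0 : 0 ≤ B := by
        have h5 : l ^ 3 / (4 * c ^ 3) ≤ 2 := by
          rw [div_le_iff₀ (by positivity)]
          calc l ^ 3 ≤ (2 * c) ^ 3 := by gcongr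
            _ = 2 * (4 * c ^ 3) := by ring
        linarith
      have h6 : B ^ 2 ≤ d ^ 2 := by nlinarith
      have h7 : l ^ 2 * (c ^ 3) ^ 2 - B ^ 2 = (1 + l ^ 3 / (4 * c ^ 3)) * (c ^ 3 * l + B) := by
        rw [hB]; ring
      have h8 : (1 + l ^ 3 / (4 * c ^ 3)) * (c ^ 3 * l + B) ≤
          (1 + l ^ 3 / (4 * c ^ 3)) * (2 * (c ^ 3 * l)) := by
        have : 0 ≤ l ^ 3 / (4 * c ^ 3) := by positivity
        have : B ≤ c ^ 3 * l := by linarith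
        gcongr; linarith
      have h9 : (1 + l ^ 3 / (4 * c ^ 3)) * (2 * (c ^ 3 * l)) = 2 * c ^ 3 * l + l ^ 4 / 2 := by
        field_simp; ring
      linarith
    have h10 : 2 * c ^ 3 + l ^ 3 / 2 ≤ 3 * c ^ 2 * l := by
      have : 0 ≤ (2 * c - l) * (l ^ 2 / 2 + l * c - c ^ 2) := by
        apply mul_nonneg (by linarith)
        nlinarith
      nlinarith
    have h11 : 16 * c ^ 4 * i ^ 2 ≤ 48 * c ^ 6 * l ^ 2 := by
      calc 16 * c ^ 4 * i ^ 2 ≤ 16 * c ^ 4 * (2 * c ^ 3 * l + l ^ 4 / 2) := by gcongr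
        _ = 16 * c ^ 4 * l * (2 * c ^ 3 + l ^ 3 / 2) := by ring
        _ ≤ 16 * c ^ 4 * l * (3 * c ^ 2 * l) := by gcongr
        _ = 48 * c ^ 6 * l ^ 2 := by ring
    have hlarge : 10000 ≤ c ^ 3 * l := by nlinarith
    have h12 : (c ^ 3 * l - 3) ^ 2 ≤ d ^ 2 := by nlinarith
    have h13 : 48 * (c ^ 3 * l) ^ 2 ≤ 49 * (c ^ 3 * l - 3) ^ 2 := by nlinarith
    nlinarith
  -- the floor map is injective on `s`
  have hinj : Set.InjOn (fun w : ℤ × ℤ => ⌊4 * c ^ 2 * (((ip w v : ℤ) : ℝ) / ((dt w v : ℤ) : ℝ))⌋)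
      (s : Set (ℤ × ℤ)) := by
    intro w hw w' hw' heq
    by_contra hne
    have h1 := hs w hw
    have h1' := hs w' hw'
    have hdet : dt w w' ≠ 0 := by
      intro h0
      rcases prim_par h1.1 h1'.1 h0 with h2 | h2
      · exact hne h2.symm
      · have ha := hneg0 w hw
        have hb := hneg0 w' hw'
        rw [h2] at hb
        have : dt (-w) v = - dt w v := by simp only [dt, Prod.fst_neg, Prod.snd_neg]; ring
        rw [this] at hb
        push_cast at hb
        linarith
    have hlt := Int.abs_sub_lt_one_of_floor_eq_floor heq
    have hd := hneg0 w hw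
    have hd' := hneg0 w' hw'
    have hid : ((ip w v : ℤ) : ℝ) * ((dt w' v : ℤ) : ℝ) - ((ip w' v : ℤ) : ℝ) * ((dt w v : ℤ) : ℝ)
        = - (nsq v * ((dt w w' : ℤ) : ℝ)) := by
      simp only [ip, dt, nsq]; push_cast; ring
    have hdle : ∀ u : ℤ × ℤ, ((dt u v : ℤ) : ℝ) ^ 2 ≤ (len u * len v) ^ 2 := by
      intro u
      rw [mul_pow, len_sq, len_sq, ← lagrange_real]
      nlinarith [sq_nonneg ((ip u v : ℤ) : ℝ)]
    have hda := abs_le_of_sq_le_sq (hdle w) (mul_nonneg (len_nonneg _) (len_nonneg _))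
    have hda' := abs_le_of_sq_le_sq (hdle w') (mul_nonneg (len_nonneg _) (len_nonneg _))
    rw [abs_of_neg hd] at hda
    rw [abs_of_neg hd'] at hda'
    have habs : (1:ℝ) ≤ |((dt w w' : ℤ) : ℝ)| := by exact_mod_cast Int.one_le_abs hdet
    set d : ℝ := ((dt w v : ℤ) : ℝ)
    set d' : ℝ := ((dt w' v : ℤ) : ℝ)
    have e : 4 * c ^ 2 * (((ip w v : ℤ) : ℝ) / d) - 4 * c ^ 2 * (((ip w' v : ℤ) : ℝ) / d') =
        4 * c ^ 2 * (- (nsq v * ((dt w w' : ℤ) : ℝ))) / (d * d') := by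
      rw [← hid]
      have := hd.ne
      have := hd'.ne
      field_simp
    rw [e] at hlt
    have hpp : 0 < d * d' := mul_pos_of_neg_of_neg hd hd'
    rw [abs_div, abs_of_pos hpp, div_lt_one hpp, abs_mul (4 * c ^ 2), abs_neg, abs_mul (nsq v),
      abs_of_nonneg (nsq_nonneg v), abs_of_nonneg (by positivity : 0 ≤ 4 * c ^ 2)] at hlt
    have h2 : d * d' ≤ (len w * len v) * (len w' * len v) := by
      have := mul_le_mul hda hda' (by linarith) (mul_nonneg (len_nonneg _) (len_nonneg _))
      linarith
    have h3 : (len w * len v) * (len w' * len v) ≤ 4 * c ^ 2 * nsq v := by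
      rw [← len_sq v]
      have : len w * len w' ≤ (2 * c) * (2 * c) := by
        have := len_nonneg w
        have := len_nonneg w'
        gcongr
        · exact h1.2.2.1
        · exact h1'.2.2.1
      nlinarith [sq_nonneg (len v)]
    have h4 : 4 * c ^ 2 * nsq v ≤ 4 * c ^ 2 * (nsq v * |((dt w w' : ℤ) : ℝ)|) := by
      have := nsq_nonneg v
      have : nsq v * 1 ≤ nsq v * |((dt w w' : ℤ) : ℝ)| := by gcongr
      rw [mul_one] at this
      gcongr
    linarith
  have hmaps : ∀ w ∈ s, ⌊4 * c ^ 2 * (((ip w v : ℤ) : ℝ) / ((dt w v : ℤ) : ℝ))⌋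
      ∈ Finset.Icc (-7 : ℤ) 7 := by
    intro w hw
    have := abs_le.1 (hbound w hw)
    rw [Finset.mem_Icc]
    constructor
    · exact Int.le_floor.2 (by push_cast; exact this.1)
    · have h7 : (⌊4 * c ^ 2 * (((ip w v : ℤ) : ℝ) / ((dt w v : ℤ) : ℝ))⌋ : ℝ) ≤ 7 :=
        (Int.floor_le _).trans this.2
      exact_mod_cast h7
  have := Finset.card_le_card_of_injOn _ hmaps hinj
  simpa using this

lemma disc_mono {x y : ℝ} (hx : 0 ≤ x) (hxy : x ≤ y) : disc x ⊆ disc y := by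
  intro p hp
  rw [mem_disc hx] at hp
  rw [mem_disc (hx.trans hxy)]
  exact hp.trans (by gcongr)

lemma low {c : ℝ} (hc : 10 ≤ c) :
    ((prim (2 * c)).card : ℝ) - (prim c).card ≤ 15 * (V (c ^ 3)).card := by
  have hc0 : 0 ≤ c := by linarith
  have hsub : prim c ⊆ prim (2 * c) :=
    Finset.filter_subset_filter _ (disc_mono hc0 (by linarith))
  have h1 : ((prim (2 * c) \ prim c).card : ℝ) = (prim (2 * c)).card - (prim c).card := by
    rw [Finset.card_sdiff_of_subset hsub, Nat.cast_sub (Finset.card_le_card hsub)]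
  rw [← h1]
  have hr : (0:ℝ) ≤ c ^ 3 := by positivity
  choose f hf using fun w => exists_lex hr w
  have hmem : ∀ w ∈ prim (2 * c) \ prim c, Int.gcd w.1 w.2 = 1 ∧ c ≤ len w ∧ len w ≤ 2 * c := by
    intro w hw
    rw [Finset.mem_sdiff] at hw
    obtain ⟨ha, hb⟩ := hw
    simp only [prim, Finset.mem_filter] at ha hb
    rw [mem_disc_len (by linarith)] at ha
    rw [mem_disc_len hc0] at hb
    refine ⟨ha.2, ?_, ha.1⟩
    by_contra hcon
    exact hb ⟨by linarith, ha.2⟩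
  have := Finset.card_le_mul_card_image_of_maps_to (s := prim (2 * c) \ prim c) (t := V (c ^ 3))
    (f := f) (fun w hw => mem_V.2 ((hf w).isVert (ne_zero_of_prim (hmem w hw).1))) 15 (by
      intro v _
      apply fiber hc v
      intro w hw
      rw [Finset.mem_filter] at hw
      obtain ⟨ha, hb, hc'⟩ := hmem w hw.1
      exact ⟨ha, hb, hc', by rw [← hw.2]; exact hf w⟩)
  exact_mod_cast this

lemma lower_final : ∀ᶠ c : ℝ in atTop, 0.3 * c ^ 2 < ((V (c ^ 3)).card : ℝ) := by
  have t1 : Tendsto (fun c : ℝ => ((prim (2 * c)).card : ℝ) / c ^ 2) atTop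
      (nhds (4 * (6 / Real.pi))) := by
    have := (prim_tendsto.comp (tendsto_id.const_mul_atTop (show (0:ℝ) < 2 by norm_num))).const_mul 4
    refine this.congr' ?_
    filter_upwards [eventually_gt_atTop 0] with c hc
    simp only [Function.comp, id]
    field_simp; ring
  have t2 := t1.sub prim_tendsto
  have hpi : (4.5:ℝ) < 4 * (6 / Real.pi) - 6 / Real.pi := by
    have : 4 * (6 / Real.pi) - 6 / Real.pi = 18 / Real.pi := by ring
    rw [this, lt_div_iff₀ Real.pi_pos]
    linarith [Real.pi_lt_d2]
  filter_upwards [t2.eventually_const_lt hpi, eventually_ge_atTop 10] with c h1 h2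
  have h3 := low h2
  have hc : 0 < c ^ 2 := by positivity
  rw [← sub_div, lt_div_iff₀ hc] at h1
  linarith
end HD

namespace HD

/-- `v` to `v + m • w` is an edge, `w` primitive, interior to the left -/
structure Edge (r : ℝ) (v w : ℤ × ℤ) (m : ℤ) : Prop where
  prim : Int.gcd w.1 w.2 = 1
  one_le : 1 ≤ m
  lex : IsLex r w v
  mem : v + m • w ∈ disc r
  not_mem : v + (m + 1) • w ∉ disc r

lemma dt_add (w p v : ℤ × ℤ) : dt w (p + v) = dt w p + dt w v := by
  simp only [dt, Prod.fst_add, Prod.snd_add]; ring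

lemma ip_add (w p v : ℤ × ℤ) : ip w (p + v) = ip w p + ip w v := by
  simp only [ip, Prod.fst_add, Prod.snd_add]; ring

lemma dt_smul (w p : ℤ × ℤ) (k : ℤ) : dt w (k • p) = k * dt w p := by
  simp only [dt, Prod.smul_fst, Prod.smul_snd, smul_eq_mul]; ring

lemma ip_smul (w p : ℤ × ℤ) (k : ℤ) : ip w (k • p) = k * ip w p := by
  simp only [ip, Prod.smul_fst, Prod.smul_snd, smul_eq_mul]; ring

lemma dt_self (w : ℤ × ℤ) : dt w w = 0 := by
  simp only [dt]; ring

lemma dt_swap (w v : ℤ × ℤ) : dt v w = - dt w v := by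
  simp only [dt]; ring

lemma ip_self (w : ℤ × ℤ) : ip w w = w.1 ^ 2 + w.2 ^ 2 := by
  simp only [ip]; ring

lemma exists_edge {r : ℝ} (hr : 1 ≤ r) {v : ℤ × ℤ} (h : isVert r v) :
    ∃ w m, Edge r v w m := by
  obtain ⟨w, h1, h2, h3⟩ := exists_out hr h
  have hw := ne_zero_of_prim h1
  by_contra hcon
  have step : ∀ n : ℕ, v + ((n : ℤ) + 1) • w ∈ disc r := by
    intro n
    induction n with
    | zero => simpa using h2
    | succ n ih =>
      by_contra hn
      refine hcon ⟨w, (n : ℤ) + 1, h1, by omega, h3, ih, ?_⟩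
      push_cast at hn
      exact hn
  have hinj : Function.Injective (fun n : ℕ => v + ((n : ℤ) + 1) • w) := by
    intro a b hab
    simp only [add_right_inj] at hab
    have e1 := congrArg (fun p => ip w p) hab
    simp only [ip_smul, ip_self] at e1
    have := sq_pos_of_ne hw
    have := mul_right_cancel₀ this.ne' e1
    omega
  exact Set.infinite_of_injective_forall_mem hinj step (disc r).finite_toSet

lemma eq_smul_of_dt {w q : ℤ × ℤ} (h : Int.gcd w.1 w.2 = 1) (hd : dt w q = 0) :
    ∃ k : ℤ, q = k • w := by
  obtain ⟨x, y, hxy⟩ := Int.isCoprime_iff_gcd_eq_one.2 h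
  simp only [dt] at hd
  refine ⟨x * q.1 + y * q.2, ?_⟩
  ext
  · simp only [Prod.smul_fst, smul_eq_mul]
    linear_combination (-q.1) * hxy - y * hd
  · simp only [Prod.smul_snd, smul_eq_mul]
    linear_combination (-q.2) * hxy + x * hd

lemma Edge.line {r : ℝ} (hr : 0 ≤ r) {v w : ℤ × ℤ} {m : ℤ} (h : Edge r v w m) {p : ℤ × ℤ}
    (hp : p ∈ disc r) (hd : dt w (p - v) = 0) : ∃ k : ℤ, 0 ≤ k ∧ k ≤ m ∧ p = v + k • w := by
  obtain ⟨k, hk⟩ := eq_smul_of_dt h.prim hd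
  have hpk : p = v + k • w := by rw [← hk]; abel
  have h0 := sq_pos_of_ne (ne_zero_of_prim h.prim)
  have h1 := (h.lex.2 p hp).2 hd
  rw [hk, ip_smul, ip_self] at h1
  refine ⟨k, by nlinarith, ?_, hpk⟩
  by_contra hcon
  exact h.not_mem (disc_conv hr (by have := h.one_le; omega) (show m + 1 ≤ k by omega) h.lex.1
    (by rw [← hpk]; exact hp))

lemma Edge.front {r : ℝ} (hr : 0 ≤ r) {v w : ℤ × ℤ} {m : ℤ} (h : Edge r v w m) :
    isVert r (v + m • w) := by
  refine lex_isVert (-1) (by norm_num) (ne_zero_of_prim h.prim) h.mem (fun p hp => ?_)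
  have e : dt w (p - (v + m • w)) = dt w (p - v) := by
    rw [dt_sub, dt_sub, dt_add, dt_smul, dt_self]; ring
  refine ⟨by rw [e]; exact (h.lex.2 p hp).1, fun h0 => ?_⟩
  rw [e] at h0
  obtain ⟨k, hk0, hkm, rfl⟩ := h.line hr hp h0
  rw [ip_sub, ip_add, ip_add, ip_smul, ip_smul, ip_self]
  have := sq_pos_of_ne (ne_zero_of_prim h.prim)
  nlinarith

lemma Edge.out_inj {r : ℝ} {v v' w : ℤ × ℤ} {m m' : ℤ} (h : Edge r v w m) (h' : Edge r v' w m') :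
    v = v' := by
  have a := h.lex.2 v' h'.lex.1
  have b := h'.lex.2 v h.lex.1
  simp only [dt_sub, ip_sub] at a b
  have hd : dt w v' - dt w v = 0 := by omega
  have a2 := a.2 hd
  have b2 := b.2 (by omega)
  have hi : ip w v' - ip w v = 0 := by omega
  have := lagrange w (v' - v)
  rw [dt_sub, ip_sub, hd, hi] at this
  have h0 := sq_pos_of_ne (ne_zero_of_prim h.prim)
  by_contra hne
  have h1 : v' - v ≠ 0 := fun h => hne (sub_eq_zero.1 h).symm
  have := sq_pos_of_ne h1
  nlinarith

lemma Edge.front_inj {r : ℝ} (hr : 0 ≤ r) {v v' w w' : ℤ × ℤ} {m m' : ℤ} (h : Edge r v w m)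
    (h' : Edge r v' w' m') (e : v + m • w = v' + m' • w') : v = v' := by
  have hm := h.one_le
  have hm' := h'.one_le
  have a := (h.lex.2 v' h'.lex.1).1
  have b := (h'.lex.2 v h.lex.1).1
  have e1 : v' - v = m • w - m' • w' := by
    have : v = v' + m' • w' - m • w := by rw [← e]; abel
    rw [this]; abel
  have e2 : v - v' = m' • w' - m • w := by rw [← neg_sub, e1]; abel
  rw [e1, dt_sub, dt_smul, dt_smul, dt_self] at a
  rw [e2, dt_sub, dt_smul, dt_smul, dt_self, dt_swap w w'] at b
  have hd : dt w w' = 0 := by nlinarith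
  rcases prim_par h.prim h'.prim hd with rfl | rfl
  · exact h.out_inj h'
  · exfalso
    have := (h.lex.2 v' h'.lex.1).2 (by rw [e1, dt_sub, dt_smul, dt_smul, dt_self, hd]; simp)
    have hq := disc_conv (r := r) (v := v) (d := w) (k := m + 1) (g := m + m')
    apply h.not_mem
    have hv' : v + (m + m') • w = v' := by
      have : v' = v + (m • w - m' • (-w)) := by rw [← e1]; abel
      rw [this, add_smul, smul_neg, sub_neg_eq_add]
    exact hq hr (by omega) (by omega) h.lex.1 (by rw [hv']; exact h'.lex.1)

lemma next_real {c l m D x y : ℝ} (hc : 10 ≤ c) (hl1 : 1 ≤ l) (hl : l ≤ 0.2 * c)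
    (hm : 1 ≤ m) (hml : (m - 1) * l < 0.95 * c) (hD0 : 0 ≤ D)
    (hnb : l ^ 2 * (c ^ 3) ^ 2 < D ^ 2 + (x + l ^ 2) ^ 2)
    (hbm : D ^ 2 + x ^ 2 ≤ l ^ 2 * (c ^ 3) ^ 2)
    (hib : x = y + m * l ^ 2)
    (hnv : l ^ 2 * (c ^ 3) ^ 2 < D ^ 2 + (y - l ^ 2) ^ 2)
    (hvm : D ^ 2 + y ^ 2 ≤ l ^ 2 * (c ^ 3) ^ 2) :
    2 * x ≤ (m + 2) * l ^ 2 ∧ (3.155 * c * l) ^ 2 ≤ l ^ 2 * (c ^ 3) ^ 2 - (D - 1) ^ 2 := by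
  have hc3 : 1000 ≤ c ^ 3 := by
    calc (1000:ℝ) = 10 ^ 3 := by norm_num
      _ ≤ c ^ 3 := by gcongr
  have hcc : 10 * c ^ 2 ≤ c ^ 3 := by nlinarith [sq_nonneg c]
  obtain ⟨S, hS⟩ : ∃ S : ℝ, S = Real.sqrt (l ^ 2 * (c ^ 3) ^ 2 - D ^ 2) := ⟨_, rfl⟩
  have hS0 : 0 ≤ S := by rw [hS]; exact Real.sqrt_nonneg _
  have hS2 : S ^ 2 = l ^ 2 * (c ^ 3) ^ 2 - D ^ 2 := by
    rw [hS, Real.sq_sqrt]; linarith [sq_nonneg x]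
  have hxS := abs_le.1 (abs_le_of_sq_le_sq (show x ^ 2 ≤ S ^ 2 by linarith) hS0)
  have hyS := abs_le.1 (abs_le_of_sq_le_sq (show y ^ 2 ≤ S ^ 2 by linarith) hS0)
  have hl2 : 0 < l ^ 2 := by positivity
  have hx1 : S < x + l ^ 2 := by
    by_contra hh
    have : (x + l ^ 2) ^ 2 ≤ S ^ 2 := sq_le_sq' (by linarith) (by linarith)
    linarith
  have hy1 : y - l ^ 2 < -S := by
    by_contra hh
    have : (y - l ^ 2) ^ 2 ≤ S ^ 2 := sq_le_sq' (by linarith) (by linarith)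
    linarith
  have hSm : 2 * S < (m + 2) * l ^ 2 := by linarith
  refine ⟨by linarith, ?_⟩
  have hSc : S ≤ c * l := by
    have : (m + 2) * l ^ 2 ≤ 2 * c * l := by
      have h1 : (m + 2) * l ≤ 2 * c := by linarith
      calc (m + 2) * l ^ 2 = ((m + 2) * l) * l := by ring
        _ ≤ 2 * c * l := by gcongr
    linarith
  have hS3 : S ^ 2 ≤ (c * l) ^ 2 := by gcongr
  have hDl : l * (c ^ 3 - 1) ≤ D := by
    apply le_trans (le_abs_self _)
    apply abs_le_of_sq_le_sq _ hD0
    have h2 : D ^ 2 = l ^ 2 * (c ^ 3) ^ 2 - S ^ 2 := by linarith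
    rw [h2]
    have h3 : l ^ 2 * c ^ 2 ≤ l ^ 2 * (2 * c ^ 3 - 1) := by
      apply mul_le_mul_of_nonneg_left _ hl2.le
      linarith [sq_nonneg c]
    linarith [mul_pow c l 2, mul_pow l (c ^ 3 - 1) 2]
  have h1 : 2 * (l * (c ^ 3 - 1)) - 1 ≤ l ^ 2 * (c ^ 3) ^ 2 - (D - 1) ^ 2 := by
    linarith [sq_nonneg S]
  have h2 : (3.155 * c * l) ^ 2 ≤ 1.991 * (c ^ 3 * l) := by
    have h4 : c ^ 2 * l * l ≤ c ^ 2 * l * (0.2 * c) := by gcongr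
    have h5 : 0 ≤ c ^ 3 * l := by positivity
    linarith
  have h3 : 1000 * l ≤ c ^ 3 * l := by gcongr
  linarith

set_option maxHeartbeats 1000000 in
lemma next_edge {c : ℝ} (hc : 10 ≤ c) {v u w : ℤ × ℤ} {m m' : ℤ} (h : Edge (c ^ 3) v u m)
    (h' : Edge (c ^ 3) (v + m • u) w m') (hl : len u ≤ 0.2 * c) :
    0.95 * c ≤ (m - 1) * len u + max (len w - 1.7 * c) 0 := by
  by_contra hcon
  push Not at hcon
  have hc3 : 1000 ≤ c ^ 3 := by
    calc (1000:ℝ) = 10 ^ 3 := by norm_num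
      _ ≤ c ^ 3 := by gcongr
  have hr0 : (0:ℝ) ≤ c ^ 3 := by positivity
  have hcc : 10 * c ^ 2 ≤ c ^ 3 := by nlinarith [sq_nonneg c]
  have hm : (1:ℝ) ≤ m := by exact_mod_cast h.one_le
  have hu := ne_zero_of_prim h.prim
  have hl1 := one_le_len hu
  have hmax := le_max_right (len w - 1.7 * c) 0
  have hmax2 := le_max_left (len w - 1.7 * c) 0
  set b := v + m • u with hb
  have hml : (m - 1) * len u < 0.95 * c := by linarith
  have hns := len_sq u
  have hnv : v - u ∉ disc (c ^ 3) := by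
    intro hv
    have := (h.lex.2 _ hv).2 (by rw [dt_sub, dt_sub, dt_self]; ring)
    rw [ip_sub, ip_sub, ip_self] at this
    have := sq_pos_of_ne hu
    linarith
  have hnb : b + u ∉ disc (c ^ 3) := by
    have := h.not_mem
    rw [add_smul, one_smul, ← add_assoc] at this
    exact this
  have hvm := h.lex.1
  have hbm := h.mem
  rw [← hb] at hbm
  have h0 := (h.lex.2 0 (zero_mem_disc hr0)).1
  have hdb : dt u b = dt u v := by rw [hb, dt_add, dt_smul, dt_self]; ring
  have hib : ((ip u b : ℤ) : ℝ) = (ip u v : ℤ) + m * len u ^ 2 := by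
    rw [hb, ip_add, ip_smul, ip_self, hns, nsq]; push_cast; ring
  have hiu : ((ip u u : ℤ) : ℝ) = len u ^ 2 := by
    rw [ip_self, hns, nsq]; push_cast; ring
  have hid : dt u (0 - v) = - dt u v := by rw [dt_sub]; simp [dt]
  rw [hid] at h0
  obtain ⟨D, hD⟩ : ∃ D : ℝ, D = -((dt u v : ℤ) : ℝ) := ⟨_, rfl⟩
  have hD0 : 0 ≤ D := by rw [hD]; exact_mod_cast h0
  rw [mem_disc_iff hr0 hu, ← hns] at hvm hbm hnv hnb
  rw [hdb] at hbm
  rw [dt_sub, ip_sub, dt_self] at hnv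
  rw [dt_add, ip_add, dt_self, hdb] at hnb
  push_cast at hnv hnb
  rw [hiu] at hnv hnb
  simp only [add_zero, sub_zero, not_le] at hnv hnb
  have hDs : ((dt u v : ℤ) : ℝ) ^ 2 = D ^ 2 := by rw [hD]; ring
  rw [hDs] at hvm hbm hnv hnb
  obtain ⟨x, hx⟩ : ∃ x : ℝ, x = ((ip u b : ℤ) : ℝ) := ⟨_, rfl⟩
  obtain ⟨y, hy⟩ : ∃ x : ℝ, x = ((ip u v : ℤ) : ℝ) := ⟨_, rfl⟩
  rw [← hx] at hbm hnb hib
  rw [← hy] at hvm hnv hib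
  obtain ⟨hxm, hYlow⟩ := next_real hc hl1 hl hm hml hD0 hnb hbm hib hnv hvm
  clear hnb hbm hib hnv hvm
  generalize len u = l at *
  obtain ⟨Y, hY⟩ : ∃ S : ℝ, S = Real.sqrt (l ^ 2 * (c ^ 3) ^ 2 - (D - 1) ^ 2) := ⟨_, rfl⟩
  have hY0 : 0 ≤ Y := by rw [hY]; exact Real.sqrt_nonneg _
  have hY2 : Y ^ 2 = l ^ 2 * (c ^ 3) ^ 2 - (D - 1) ^ 2 := by
    rw [hY, Real.sq_sqrt]
    exact (sq_nonneg _).trans hYlow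
  have hY3 : 3.155 * c * l ≤ Y := by
    rw [← hY2] at hYlow
    exact (abs_le_of_sq_le_sq hYlow hY0 |> le_trans (le_abs_self _))
  have hlY : l ^ 2 ≤ Y := by nlinarith
  obtain ⟨q, hq1, hq2, hq3⟩ := line_pt h.prim (dt u v + 1) Y
  rw [← hns] at hq2
  have hqd : q ∈ disc (c ^ 3) := by
    rw [mem_disc_iff hr0 hu, hq1, ← hns]
    have : ((ip u q : ℤ) : ℝ) ^ 2 ≤ Y ^ 2 := sq_le_sq' (by linarith) hq3
    have e : (((dt u v + 1 : ℤ)) : ℝ) = -(D - 1) := by push_cast; rw [hD]; ring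
    rw [e]
    linarith [neg_sq (D - 1)]
  -- position of `w`
  have hbw : b + w ∈ disc (c ^ 3) := by
    have := disc_conv hr0 (k := 1) (g := m') (by norm_num) h'.one_le h'.lex.1 h'.mem
    simpa using this
  have hk0 := (h.lex.2 _ hbw).1
  have e0 : dt u (b + w - v) = dt u w := by rw [dt_sub, dt_add, hdb]; ring
  rw [e0] at hk0
  have hqb : dt u (q - b) = 1 := by rw [dt_sub, hq1, hdb]; ring
  have hwq := (h'.lex.2 q hqd).1
  have hk1 : 1 ≤ dt u w := by
    by_contra hk
    have hkz : dt u w = 0 := by omega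
    rcases prim_par h.prim h'.prim hkz with rfl | rfl
    · apply h.not_mem
      rw [add_smul, one_smul, ← add_assoc]
      exact hbw
    · have : dt (-u) (q - b) = - dt u (q - b) := by simp [dt]; ring
      omega
  have hI : ((ip u (q - b) : ℤ) : ℝ) = (ip u q : ℤ) - x := by rw [ip_sub, hx]; push_cast; ring
  have ident : (u.1 ^ 2 + u.2 ^ 2) * dt w (q - b) = ip u w * dt u (q - b) - dt u w * ip u (q - b) := by
    simp only [dt, ip]; ring
  have hge : dt u w * ip u (q - b) ≤ ip u w := by
    rw [hqb] at ident
    have := sq_pos_of_ne hu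
    nlinarith
  have hIpos : (3.155 * c - 0.475 * c - 2.5 * l) * l ≤ ((ip u (q - b) : ℤ) : ℝ) := by
    rw [hI]
    nlinarith
  have hIpos2 : 3.155 * c * l - (m / 2 + 2) * l ^ 2 ≤ ((ip u (q - b) : ℤ) : ℝ) := by
    rw [hI]
    linarith
  have hI0 : (0:ℝ) ≤ ((ip u (q - b) : ℤ) : ℝ) := by
    refine le_trans ?_ hIpos
    apply mul_nonneg <;> linarith
  have hI0' : 0 ≤ ip u (q - b) := by exact_mod_cast hI0
  have hge2 : ip u (q - b) ≤ ip u w := by nlinarith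
  have hge3 : ((ip u (q - b) : ℤ) : ℝ) ≤ ((ip u w : ℤ) : ℝ) := by exact_mod_cast hge2
  have hcs : ((ip u w : ℤ) : ℝ) ≤ l * len w := by
    refine le_trans (le_abs_self _) (abs_le_of_sq_le_sq ?_ (by have := len_nonneg w; positivity))
    rw [mul_pow, len_sq w, hns, ← lagrange_real]
    nlinarith [sq_nonneg ((dt u w : ℤ) : ℝ)]
  have hfin : 3.155 * c - (m / 2 + 2) * l ≤ len w := by
    have : (3.155 * c - (m / 2 + 2) * l) * l ≤ len w * l := by linarith
    exact le_of_mul_le_mul_right this (by linarith)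
  nlinarith
end HD

namespace HD

def lin (a b : ℝ) (p : ℤ × ℤ) : ℝ := a * p.1 + b * p.2

lemma lin_mem {r a b : ℝ} (hr : 0 ≤ r) (hab : a ^ 2 + b ^ 2 = 1) {p : ℤ × ℤ} (hp : p ∈ disc r) :
    -r ≤ lin a b p ∧ lin a b p ≤ r := by
  rw [mem_disc hr] at hp
  apply abs_le.1
  apply abs_le_of_sq_le_sq _ hr
  refine le_trans ?_ hp
  have : (p.1 : ℝ) ^ 2 + (p.2 : ℝ) ^ 2 - lin a b p ^ 2 = (b * p.1 - a * p.2) ^ 2 := by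
    unfold lin
    linear_combination (-(p.1 : ℝ) ^ 2 - (p.2 : ℝ) ^ 2) * hab
  linarith [sq_nonneg (b * (p.1 : ℝ) - a * p.2)]

lemma comb_zero {A d t M : ℝ} (hA : 0 ≤ A) (hB : 0 ≤ A + M * d) (ht : 0 < t) (htM : t < M) :
    0 ≤ A + t * d ∧ (A + t * d = 0 → d = 0) := by
  have hM : 0 < M := by linarith
  have e : M * (A + t * d) = (M - t) * A + t * (A + M * d) := by ring
  have h1 : 0 ≤ (M - t) * A := mul_nonneg (by linarith) hA
  have h2 : 0 ≤ t * (A + M * d) := mul_nonneg ht.le hB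
  constructor
  · by_contra h
    have : M * (A + t * d) < 0 := mul_neg_of_pos_of_neg hM (by linarith)
    linarith
  · intro h
    rw [h, mul_zero] at e
    have h3 : (M - t) * A = 0 := by linarith
    have hA0 : A = 0 := by
      rcases mul_eq_zero.1 h3 with h4 | h4
      · linarith
      · exact h4
    rw [hA0, zero_add] at h
    rcases mul_eq_zero.1 h with h4 | h4
    · linarith
    · exact h4

lemma disj {r a b x : ℝ} (hab : a ^ 2 + b ^ 2 = 1) {v v' w w' : ℤ × ℤ} {m m' : ℤ}
    (h : Edge r v w m) (h' : Edge r v' w' m') (hw : 0 < lin a b w) (hw' : 0 < lin a b w')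
    (hx : x ∈ Ioo (lin a b v) (lin a b v + m * lin a b w))
    (hx' : x ∈ Ioo (lin a b v') (lin a b v' + m' * lin a b w')) : v = v' := by
  obtain ⟨t, ht⟩ : ∃ t : ℝ, t = (x - lin a b v) / lin a b w := ⟨_, rfl⟩
  obtain ⟨t', ht'⟩ : ∃ t : ℝ, t = (x - lin a b v') / lin a b w' := ⟨_, rfl⟩
  have ht0 : 0 < t := by rw [ht]; exact div_pos (by linarith [hx.1]) hw
  have ht0' : 0 < t' := by rw [ht']; exact div_pos (by linarith [hx'.1]) hw'
  have htm : t < m := by rw [ht, div_lt_iff₀ hw]; linarith [hx.2]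
  have htm' : t' < m' := by rw [ht', div_lt_iff₀ hw']; linarith [hx'.2]
  have hte : t * lin a b w = x - lin a b v := by rw [ht]; field_simp
  have hte' : t' * lin a b w' = x - lin a b v' := by rw [ht']; field_simp
  have hA : (0:ℝ) ≤ ((dt w (v' - v) : ℤ) : ℝ) := by exact_mod_cast (h.lex.2 _ h'.lex.1).1
  have hA' : (0:ℝ) ≤ ((dt w' (v - v') : ℤ) : ℝ) := by exact_mod_cast (h'.lex.2 _ h.lex.1).1
  have hB : (0:ℝ) ≤ ((dt w (v' - v) : ℤ) : ℝ) + m' * ((dt w w' : ℤ) : ℝ) := by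
    have := (h.lex.2 _ h'.mem).1
    rw [add_sub_right_comm, dt_add, dt_smul] at this
    exact_mod_cast this
  have hB' : (0:ℝ) ≤ ((dt w' (v - v') : ℤ) : ℝ) + m * ((dt w' w : ℤ) : ℝ) := by
    have := (h'.lex.2 _ h.mem).1
    rw [add_sub_right_comm, dt_add, dt_smul] at this
    exact_mod_cast this
  obtain ⟨c1, c2⟩ := comb_zero hA hB ht0' htm'
  obtain ⟨c1', c2'⟩ := comb_zero hA' hB' ht0 htm
  obtain ⟨k, hk⟩ : ∃ k : ℝ, k = -b * (v'.1 + t' * w'.1 - v.1 - t * w.1)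
    + a * (v'.2 + t' * w'.2 - v.2 - t * w.2) := ⟨_, rfl⟩
  have hz : a * (v'.1 + t' * w'.1 - v.1 - t * w.1)
    + b * (v'.2 + t' * w'.2 - v.2 - t * w.2) = 0 := by
    unfold lin at hte hte'
    linear_combination hte' - hte
  have e1 : ((dt w (v' - v) : ℤ) : ℝ) + t' * ((dt w w' : ℤ) : ℝ) = k * lin a b w := by
    rw [hk]
    simp only [dt, lin, Prod.fst_sub, Prod.snd_sub]
    push_cast
    linear_combination (-(w.1 : ℝ) * (v'.2 + t' * w'.2 - v.2 - t * w.2)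
      + (w.2 : ℝ) * (v'.1 + t' * w'.1 - v.1 - t * w.1)) * hab
      + ((w.1 : ℝ) * b - w.2 * a) * hz
  have e2 : ((dt w' (v - v') : ℤ) : ℝ) + t * ((dt w' w : ℤ) : ℝ) = - k * lin a b w' := by
    rw [hk]
    simp only [dt, lin, Prod.fst_sub, Prod.snd_sub]
    push_cast
    linear_combination (-1) * ((-(w'.1 : ℝ) * (v'.2 + t' * w'.2 - v.2 - t * w.2)
      + (w'.2 : ℝ) * (v'.1 + t' * w'.1 - v.1 - t * w.1)) * hab
      + ((w'.1 : ℝ) * b - w'.2 * a) * hz)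
  rw [e1] at c1 c2
  rw [e2] at c1'
  have hk1 : 0 ≤ k := nonneg_of_mul_nonneg_left c1 hw
  have hk2 : 0 ≤ -k := nonneg_of_mul_nonneg_left c1' hw'
  have hk0 : k = 0 := by linarith
  have hd := c2 (by rw [hk0]; ring)
  have hd' : dt w w' = 0 := by exact_mod_cast hd
  rcases prim_par h.prim h'.prim hd' with rfl | rfl
  · exact h.out_inj h'
  · exfalso
    have : lin a b (-w) = - lin a b w := by simp [lin]; ring
    linarith

lemma proj_sum {r a b : ℝ} (hr : 0 ≤ r) (hab : a ^ 2 + b ^ 2 = 1) (S : Finset (ℤ × ℤ))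
    (W : ℤ × ℤ → ℤ × ℤ) (M : ℤ × ℤ → ℤ) (hE : ∀ v ∈ S, Edge r v (W v) (M v)) :
    ∑ v ∈ S, M v * max (lin a b (W v)) 0 ≤ 2 * r := by
  classical
  set T := S.filter (fun v => 0 < lin a b (W v)) with hT
  have e1 : ∑ v ∈ S, M v * max (lin a b (W v)) 0 = ∑ v ∈ T, M v * lin a b (W v) := by
    rw [hT, Finset.sum_filter]
    apply Finset.sum_congr rfl
    intro v _
    split_ifs with h
    · rw [max_eq_left h.le]
    · rw [max_eq_right (by linarith)]; ring
  rw [e1]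
  have hTm : ∀ v ∈ T, Edge r v (W v) (M v) ∧ 0 < lin a b (W v) := by
    intro v hv
    rw [hT, Finset.mem_filter] at hv
    exact ⟨hE v hv.1, hv.2⟩
  set I : ℤ × ℤ → Set ℝ := fun v => Ioo (lin a b v) (lin a b v + M v * lin a b (W v)) with hI
  have hlin : ∀ v w : ℤ × ℤ, ∀ m : ℤ, lin a b (v + m • w) = lin a b v + m * lin a b w := by
    intro v w m
    simp [lin]; ring
  have hsub : (⋃ v ∈ T, I v) ⊆ Icc (-r) r := by
    intro x hx
    simp only [mem_iUnion] at hx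
    obtain ⟨v, hv, hx⟩ := hx
    obtain ⟨h1, _⟩ := hTm v hv
    have a1 := lin_mem hr hab h1.lex.1
    have a2 := lin_mem hr hab h1.mem
    rw [hlin] at a2
    exact ⟨by linarith [hx.1], by linarith [hx.2]⟩
  have hdis : (T : Set (ℤ × ℤ)).PairwiseDisjoint I := by
    intro v hv v' hv' hne
    rw [Function.onFun, Set.disjoint_left]
    intro x hx hx'
    obtain ⟨h1, h2⟩ := hTm v hv
    obtain ⟨h1', h2'⟩ := hTm v' hv'
    exact hne (disj hab h1 h1' h2 h2' hx hx')
  have hvol := measure_mono (μ := volume) hsub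
  rw [measure_biUnion_finset hdis (fun v _ => measurableSet_Ioo)] at hvol
  simp only [hI, Real.volume_Ioo, Real.volume_Icc, add_sub_cancel_left] at hvol
  have hnn : ∀ v ∈ T, 0 ≤ M v * lin a b (W v) := by
    intro v hv
    obtain ⟨h1, h2⟩ := hTm v hv
    have : (1:ℝ) ≤ M v := by exact_mod_cast h1.one_le
    positivity
  rw [← ENNReal.ofReal_sum_of_nonneg hnn] at hvol
  rw [ENNReal.ofReal_le_ofReal_iff (by linarith)] at hvol
  linarith

lemma int_abs_cos : ∫ x in (0:ℝ)..(2 * Real.pi), max (Real.cos x) 0 = 2 := by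
  have hper : Function.Periodic (fun x => max (Real.cos x) 0) (2 * Real.pi) := by
    intro x; simp [Real.cos_periodic x]
  have h := hper.intervalIntegral_add_eq 0 (-(Real.pi / 2))
  rw [zero_add] at h
  have hcont : Continuous (fun x => max (Real.cos x) 0) := by fun_prop
  have hpi := Real.pi_pos
  rw [h, ← intervalIntegral.integral_add_adjacent_intervals (b := Real.pi / 2)
    (hcont.intervalIntegrable _ _) (hcont.intervalIntegrable _ _)]
  have e1 : ∫ x in (-(Real.pi/2))..(Real.pi/2), max (Real.cos x) 0 =
      ∫ x in (-(Real.pi/2))..(Real.pi/2), Real.cos x := by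
    apply intervalIntegral.integral_congr
    intro x hx
    rw [uIcc_of_le (by linarith)] at hx
    exact max_eq_left (Real.cos_nonneg_of_mem_Icc hx)
  have e2 : ∫ x in (Real.pi/2)..(-(Real.pi/2) + 2 * Real.pi), max (Real.cos x) 0 =
      ∫ x in (Real.pi/2)..(-(Real.pi/2) + 2 * Real.pi), (0:ℝ) := by
    apply intervalIntegral.integral_congr
    intro x hx
    rw [uIcc_of_le (by linarith)] at hx
    exact max_eq_right (Real.cos_nonpos_of_pi_div_two_le_of_le hx.1 (by linarith [hx.2]))
  rw [e1, e2, integral_cos, intervalIntegral.integral_zero, Real.sin_neg, Real.sin_pi_div_two]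
  norm_num

lemma int_lin (w : ℤ × ℤ) :
    ∫ x in (0:ℝ)..(2 * Real.pi), max (lin (Real.cos x) (Real.sin x) w) 0 = 2 * len w := by
  set z : ℂ := ⟨w.1, w.2⟩ with hz
  have hn : ‖z‖ = len w := by
    rw [Complex.norm_def, Complex.normSq_apply, len, nsq]; congr 1; simp [hz]; ring
  set φ := Complex.arg z
  have h1 : (w.1 : ℝ) = len w * Real.cos φ := by rw [← hn, Complex.norm_mul_cos_arg]
  have h2 : (w.2 : ℝ) = len w * Real.sin φ := by rw [← hn, Complex.norm_mul_sin_arg]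
  have e : ∀ x, max (lin (Real.cos x) (Real.sin x) w) 0 = len w * max (Real.cos (x - φ)) 0 := by
    intro x
    rw [mul_max_of_nonneg _ _ (len_nonneg w), mul_zero, Real.cos_sub, lin, h1, h2]
    congr 1; ring
  simp only [e]
  rw [intervalIntegral.integral_const_mul,
    intervalIntegral.integral_comp_sub_right (fun x => max (Real.cos x) 0)]
  have hper : Function.Periodic (fun x => max (Real.cos x) 0) (2 * Real.pi) := by
    intro x; simp [Real.cos_periodic x]
  have h := hper.intervalIntegral_add_eq (0 - φ) 0
  have h3 : 0 - φ + 2 * Real.pi = 2 * Real.pi - φ := by ring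
  rw [h3, zero_add, int_abs_cos] at h
  rw [h]; ring

lemma perim {r : ℝ} (hr : 0 ≤ r) (S : Finset (ℤ × ℤ))
    (W : ℤ × ℤ → ℤ × ℤ) (M : ℤ × ℤ → ℤ) (hE : ∀ v ∈ S, Edge r v (W v) (M v)) :
    ∑ v ∈ S, M v * len (W v) ≤ 2 * Real.pi * r := by
  have hcont : ∀ w : ℤ × ℤ, Continuous (fun x => max (lin (Real.cos x) (Real.sin x) w) 0) := by
    intro w; unfold lin; fun_prop
  have hcont2 : Continuous (fun x => ∑ v ∈ S, M v * max (lin (Real.cos x) (Real.sin x) (W v)) 0) := by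
    apply continuous_finset_sum
    intro v _
    exact continuous_const.mul (hcont _)
  have h1 : ∫ x in (0:ℝ)..(2 * Real.pi), ∑ v ∈ S, M v * max (lin (Real.cos x) (Real.sin x) (W v)) 0
      ≤ ∫ x in (0:ℝ)..(2 * Real.pi), 2 * r := by
    apply intervalIntegral.integral_mono (by linarith [Real.pi_pos])
      (hcont2.intervalIntegrable _ _) (by simp)
    intro x
    exact proj_sum hr (Real.cos_sq_add_sin_sq x) S W M hE
  have h3 : ∀ v ∈ S, IntervalIntegrable (fun x => (M v : ℝ) *
      max (lin (Real.cos x) (Real.sin x) (W v)) 0) volume 0 (2 * Real.pi) :=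
    fun v _ => (continuous_const.mul (hcont (W v))).intervalIntegrable _ _
  rw [intervalIntegral.integral_finset_sum h3] at h1
  simp only [intervalIntegral.integral_const_mul, int_lin, intervalIntegral.integral_const,
    smul_eq_mul, sub_zero] at h1
  have h2 : ∑ v ∈ S, (M v : ℝ) * (2 * len (W v)) = 2 * ∑ v ∈ S, M v * len (W v) := by
    rw [Finset.mul_sum]; apply Finset.sum_congr rfl; intros; ring
  rw [h2] at h1
  linarith
end HD

namespace HD

lemma step_bound (n : ℕ) {δ x : ℝ} (hδ : 0 ≤ δ) (hx : 0 ≤ x) :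
    n * δ - x ≤ ∑ k ∈ Finset.range n, if x ≤ ((k : ℝ) + 1) * δ then δ else 0 := by
  have hnn : ∀ n : ℕ, 0 ≤ ∑ k ∈ Finset.range n, if x ≤ ((k : ℝ) + 1) * δ then δ else 0 := by
    intro n
    apply Finset.sum_nonneg
    intro k _
    split_ifs <;> simp [hδ]
  induction n with
  | zero => simp [hx]
  | succ n ih =>
    rw [Finset.sum_range_succ]
    have := hnn n
    push_cast
    split_ifs with h
    · linarith
    · linarith

lemma mem_prim {x : ℝ} (hx : 0 ≤ x) {w : ℤ × ℤ} :
    w ∈ prim x ↔ len w ≤ x ∧ Int.gcd w.1 w.2 = 1 := by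
  rw [prim, Finset.mem_filter, mem_disc_len hx]

lemma sum_prim_le (n : ℕ) {δ : ℝ} (hδ : 0 ≤ δ) :
    ∑ w ∈ prim (n * δ), (n * δ - len w) ≤
      δ * ∑ k ∈ Finset.range n, ((prim (((k : ℝ) + 1) * δ)).card : ℝ) := by
  calc ∑ w ∈ prim (n * δ), (n * δ - len w)
      ≤ ∑ w ∈ prim (n * δ), ∑ k ∈ Finset.range n,
          (if len w ≤ ((k : ℝ) + 1) * δ then δ else 0) :=
        Finset.sum_le_sum (fun w _ => step_bound n hδ (len_nonneg w))
    _ = ∑ k ∈ Finset.range n, ∑ w ∈ prim (n * δ),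
          (if len w ≤ ((k : ℝ) + 1) * δ then δ else 0) := Finset.sum_comm
    _ ≤ ∑ k ∈ Finset.range n, δ * ((prim (((k : ℝ) + 1) * δ)).card : ℝ) := by
        apply Finset.sum_le_sum
        intro k _
        rw [← Finset.sum_filter, Finset.sum_const, nsmul_eq_mul, mul_comm]
        apply mul_le_mul_of_nonneg_left _ hδ
        have : (prim (n * δ)).filter (fun w => len w ≤ ((k : ℝ) + 1) * δ)
            ⊆ prim (((k : ℝ) + 1) * δ) := by
          intro w hw
          rw [Finset.mem_filter, mem_prim (by positivity)] at hw
          rw [mem_prim (by positivity)]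
          exact ⟨hw.2, hw.1.2⟩
        exact_mod_cast Finset.card_le_card this
    _ = _ := by rw [Finset.mul_sum]

lemma account {c : ℝ} (hc : 10 ≤ c) :
    ((V (c ^ 3)).card : ℝ) * (1.7 * c) ≤ 2 * Real.pi * c ^ 3
      + ∑ w ∈ prim (1.7 * c), (1.7 * c - len w) - 0.95 * c * (prim (0.2 * c)).card := by
  classical
  have hc3 : 1 ≤ c ^ 3 := one_le_pow₀ (by linarith)
  have hr0 : 0 ≤ c ^ 3 := by linarith
  have hL : 0 ≤ 1.7 * c := by linarith
  have hs : 0 ≤ 0.2 * c := by linarith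
  set S := V (c ^ 3) with hS
  have hex : ∀ v, ∃ w m, v ∈ S → Edge (c ^ 3) v w m := by
    intro v
    by_cases hv : v ∈ S
    · obtain ⟨w, m, h⟩ := exists_edge hc3 (mem_V.1 hv)
      exact ⟨w, m, fun _ => h⟩
    · exact ⟨0, 0, fun h => absurd h hv⟩
  choose W M hE using hex
  set N : ℤ × ℤ → ℤ × ℤ := fun v => v + M v • W v with hN
  have hNS : ∀ v ∈ S, N v ∈ S := fun v hv => mem_V.2 ((hE v hv).front hr0)
  have hNinj : Set.InjOn N S := fun v hv v' hv' e => (hE v hv).front_inj hr0 (hE v' hv') e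
  have hWinj : Set.InjOn W S := fun v hv v' hv' e =>
    (hE v hv).out_inj (by rw [e]; exact hE v' hv')
  have hper := perim hr0 S W M hE
  have hM1 : ∀ v ∈ S, (0:ℝ) ≤ (M v - 1) * len (W v) := by
    intro v hv
    have : (1:ℝ) ≤ M v := by exact_mod_cast (hE v hv).one_le
    exact mul_nonneg (by linarith) (len_nonneg _)
  have hid : ∀ v, 1.7 * c - M v * len (W v) = max (1.7 * c - len (W v)) 0
      - ((M v - 1) * len (W v) + max (len (W v) - 1.7 * c) 0) := by
    intro v
    rcases le_total (len (W v)) (1.7 * c) with h | h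
    · rw [max_eq_left (by linarith), max_eq_right (by linarith)]; ring
    · rw [max_eq_right (by linarith), max_eq_left (by linarith)]; ring
  have hsum : (S.card : ℝ) * (1.7 * c) - ∑ v ∈ S, M v * len (W v)
      = ∑ v ∈ S, max (1.7 * c - len (W v)) 0
      - (∑ v ∈ S, (M v - 1) * len (W v) + ∑ v ∈ S, max (len (W v) - 1.7 * c) 0) := by
    rw [← Finset.sum_add_distrib, ← Finset.sum_sub_distrib, ← nsmul_eq_mul, ← Finset.sum_const,
      ← Finset.sum_sub_distrib]
    exact Finset.sum_congr rfl (fun v _ => hid v)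
  -- short edges
  set S0 := S.filter (fun v => len (W v) ≤ 0.2 * c) with hS0
  have hS0S : S0 ⊆ S := Finset.filter_subset _ _
  have hlong : ∑ v ∈ S0, max (len (W (N v)) - 1.7 * c) 0 ≤ ∑ v ∈ S, max (len (W v) - 1.7 * c) 0 := by
    rw [← Finset.sum_image (f := fun v => max (len (W v) - 1.7 * c) 0) (g := N)
      (hNinj.mono (by exact_mod_cast hS0S))]
    apply Finset.sum_le_sum_of_subset_of_nonneg
    · intro v hv
      obtain ⟨u, hu, rfl⟩ := Finset.mem_image.1 hv
      exact hNS u (hS0S hu)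
    · intros; exact le_max_right _ _
  have hshort : ∑ v ∈ S0, (M v - 1) * len (W v) ≤ ∑ v ∈ S, (M v - 1) * len (W v) :=
    Finset.sum_le_sum_of_subset_of_nonneg hS0S (fun v hv _ => hM1 v hv)
  have hS0low : (S0.card : ℝ) * (0.95 * c) ≤ ∑ v ∈ S0, (M v - 1) * len (W v)
      + ∑ v ∈ S0, max (len (W (N v)) - 1.7 * c) 0 := by
    rw [← Finset.sum_add_distrib, ← nsmul_eq_mul, ← Finset.sum_const]
    apply Finset.sum_le_sum
    intro v hv
    have hvS := hS0S hv
    exact next_edge hc (hE v hvS) (hE _ (hNS v hvS)) (Finset.mem_filter.1 hv).2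
  -- the main sum
  set S1 := S.filter (fun v => len (W v) ≤ 1.7 * c) with hS1
  have hS1S : S1 ⊆ S := Finset.filter_subset _ _
  have hmain : ∑ v ∈ S, max (1.7 * c - len (W v)) 0 = ∑ w ∈ S1.image W, (1.7 * c - len w) := by
    rw [Finset.sum_image (hWinj.mono (by exact_mod_cast hS1S)), hS1, Finset.sum_filter]
    apply Finset.sum_congr rfl
    intro v _
    split_ifs with h
    · rw [max_eq_left (by linarith)]
    · rw [max_eq_right (by linarith)]
  have himg : S1.image W ⊆ prim (1.7 * c) := by
    intro w hw
    obtain ⟨v, hv, rfl⟩ := Finset.mem_image.1 hw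
    rw [mem_prim hL]
    exact ⟨(Finset.mem_filter.1 hv).2, (hE v (hS1S hv)).prim⟩
  have hsplit := Finset.sum_sdiff (f := fun w => 1.7 * c - len w) himg
  have hsd : prim (0.2 * c) \ S0.image W ⊆ prim (1.7 * c) \ S1.image W := by
    intro w hw
    rw [Finset.mem_sdiff, mem_prim hs] at hw
    rw [Finset.mem_sdiff, mem_prim hL]
    refine ⟨⟨by linarith [hw.1.1], hw.1.2⟩, fun h => hw.2 ?_⟩
    obtain ⟨v, hv, rfl⟩ := Finset.mem_image.1 h
    exact Finset.mem_image_of_mem _ (Finset.mem_filter.2 ⟨hS1S hv, hw.1.1⟩)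
  have hunused : (((prim (0.2 * c)).card : ℝ) - S0.card) * (0.95 * c) ≤
      ∑ w ∈ prim (1.7 * c) \ S1.image W, (1.7 * c - len w) := by
    calc (((prim (0.2 * c)).card : ℝ) - S0.card) * (0.95 * c)
        ≤ ((prim (0.2 * c) \ S0.image W).card : ℝ) * (0.95 * c) := by
          apply mul_le_mul_of_nonneg_right _ (by linarith)
          have h1 := Finset.le_card_sdiff (S0.image W) (prim (0.2 * c))
          have h2 := Finset.card_image_le (s := S0) (f := W)
          have h3 : (prim (0.2 * c)).card ≤ (prim (0.2 * c) \ S0.image W).card + S0.card := by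
            omega
          have h4 : ((prim (0.2 * c)).card : ℝ) ≤ (prim (0.2 * c) \ S0.image W).card + S0.card := by
            exact_mod_cast h3
          linarith
      _ ≤ ∑ w ∈ prim (0.2 * c) \ S0.image W, (1.7 * c - len w) := by
          rw [← nsmul_eq_mul, ← Finset.sum_const]
          apply Finset.sum_le_sum
          intro w hw
          have := (mem_prim hs).1 (Finset.mem_sdiff.1 hw).1
          linarith [this.1]
      _ ≤ _ := by
          apply Finset.sum_le_sum_of_subset_of_nonneg hsd
          intro w hw _
          have := (mem_prim hL).1 (Finset.mem_sdiff.1 hw).1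
          linarith [this.1]
  linarith

lemma prim_scale {a : ℝ} (ha : 0 < a) :
    Tendsto (fun c : ℝ => ((prim (a * c)).card : ℝ) / c ^ 2) atTop
      (nhds (a ^ 2 * (6 / Real.pi))) := by
  have := (prim_tendsto.comp (tendsto_id.const_mul_atTop ha)).const_mul (a ^ 2)
  refine this.congr' ?_
  filter_upwards [eventually_gt_atTop 0] with c hc
  simp only [Function.comp, id]
  field_simp

lemma sum_sq (n : ℕ) : ∑ k ∈ Finset.range n, ((k : ℝ) + 1) ^ 2 = (n : ℝ) * (n + 1) * (2 * n + 1) / 6 := by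
  induction n with
  | zero => simp
  | succ n ih => rw [Finset.sum_range_succ, ih]; push_cast; ring

lemma upper_final : ∀ᶠ c : ℝ in atTop, ((V (c ^ 3)).card : ℝ) < 5.5 * c ^ 2 := by
  have t1 : Tendsto (fun c : ℝ => ∑ k ∈ Finset.range 1000,
      ((prim ((((k : ℝ) + 1) * 0.0017) * c)).card : ℝ) / c ^ 2) atTop
      (nhds (∑ k ∈ Finset.range 1000, ((((k : ℝ) + 1) * 0.0017) ^ 2 * (6 / Real.pi)))) :=
    tendsto_finsetSum _ (fun k _ => prim_scale (by positivity))
  have t2 := prim_scale (show (0:ℝ) < 0.2 by norm_num)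
  have t3 := ((t1.const_mul 0.0017).const_add (2 * Real.pi)).sub (t2.const_mul 0.95)
  have hlim : 2 * Real.pi + 0.0017 * ∑ k ∈ Finset.range 1000,
      ((((k : ℝ) + 1) * 0.0017) ^ 2 * (6 / Real.pi)) - 0.95 * (0.2 ^ 2 * (6 / Real.pi)) < 5.5 * 1.7 := by
    have e : ∑ k ∈ Finset.range 1000, ((((k : ℝ) + 1) * 0.0017) ^ 2 * (6 / Real.pi))
        = 0.0017 ^ 2 * (6 / Real.pi) * 333833500 := by
      have := sum_sq 1000
      have e2 : ∑ k ∈ Finset.range 1000, ((((k : ℝ) + 1) * 0.0017) ^ 2 * (6 / Real.pi))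
          = 0.0017 ^ 2 * (6 / Real.pi) * ∑ k ∈ Finset.range 1000, ((k : ℝ) + 1) ^ 2 := by
        rw [Finset.mul_sum]
        apply Finset.sum_congr rfl
        intros; ring
      rw [e2, this]; norm_num
    rw [e]
    have h1 := Real.pi_gt_d4
    have h2 := Real.pi_lt_d4
    have h3 : 6 / Real.pi ≤ 1.90992 := by
      rw [div_le_iff₀ Real.pi_pos]; linarith
    linarith
  filter_upwards [t3.eventually_lt_const hlim, eventually_ge_atTop 10] with c h1 h2
  have hc : 0 < c := by linarith
  have ha := account h2
  have hb := sum_prim_le 1000 (show 0 ≤ 0.0017 * c by linarith)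
  have e1 : ((1000 : ℕ) : ℝ) * (0.0017 * c) = 1.7 * c := by push_cast; ring
  rw [e1] at hb
  have e2 : ∑ k ∈ Finset.range 1000, ((prim ((((k : ℝ) + 1) * 0.0017) * c)).card : ℝ) / c ^ 2
      = (∑ k ∈ Finset.range 1000, ((prim (((k : ℝ) + 1) * (0.0017 * c))).card : ℝ)) / c ^ 2 := by
    rw [Finset.sum_div]
    apply Finset.sum_congr rfl
    intro k _
    rw [mul_assoc]
  rw [e2] at h1
  generalize (∑ k ∈ Finset.range 1000, ((prim (((k : ℝ) + 1) * (0.0017 * c))).card : ℝ)) = Q1 at *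
  generalize ((prim (0.2 * c)).card : ℝ) = A0 at *
  generalize ((V (c ^ 3)).card : ℝ) = N at *
  have h3 : (2 * Real.pi + 0.0017 * (Q1 / c ^ 2) - 0.95 * (A0 / c ^ 2)) * c ^ 3 < 5.5 * 1.7 * c ^ 3 := by
    gcongr
  have e3 : (2 * Real.pi + 0.0017 * (Q1 / c ^ 2) - 0.95 * (A0 / c ^ 2)) * c ^ 3 =
      2 * Real.pi * c ^ 3 + 0.0017 * c * Q1 - 0.95 * c * A0 := by
    field_simp
  rw [e3] at h3
  have h4 : N * (1.7 * c) < 5.5 * c ^ 2 * (1.7 * c) := by linarith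
  exact lt_of_mul_lt_mul_right h4 (by linarith)
end HD

/-- Balog–Bárány: for all sufficiently large `r`, the convex hull of the integer points in
the disc of radius `r` has between `0.3 r^{2/3}` and `5.5 r^{2/3}` vertices. -/
theorem vertices_of_integer_hull_of_disc :
    ∃ R : ℝ, ∀ r : ℝ, R ≤ r →
      0.3 * r ^ ((2 : ℝ) / 3) <
        (numVertices 2 (integerHull 2 (Metric.closedBall (0 : E 2) r)) : ℝ) ∧
      (numVertices 2 (integerHull 2 (Metric.closedBall (0 : E 2) r)) : ℝ) <
        5.5 * r ^ ((2 : ℝ) / 3) := by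
  have hcu : Tendsto (fun r : ℝ => r ^ ((1:ℝ) / 3)) atTop atTop :=
    tendsto_rpow_atTop (by norm_num)
  have h := (hcu.eventually (HD.lower_final.and HD.upper_final)).and (eventually_ge_atTop (0:ℝ))
  obtain ⟨R, hR⟩ := eventually_atTop.1 h
  refine ⟨R, fun r hr => ?_⟩
  obtain ⟨⟨h1, h2⟩, h0⟩ := hR r hr
  have e3 : (r ^ ((1:ℝ) / 3)) ^ 3 = r := by
    rw [← Real.rpow_natCast, ← Real.rpow_mul h0]; norm_num
  have e2 : (r ^ ((1:ℝ) / 3)) ^ 2 = r ^ ((2:ℝ) / 3) := by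
    rw [← Real.rpow_natCast, ← Real.rpow_mul h0]; norm_num
  rw [e3, e2] at h1 h2
  rw [HD.bridge h0]
  exact ⟨h1, h2⟩
end
end
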